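/- arXiv:1604.00284 — 3 statements merged into one kernel-verified Lean document; each statement's English description precedes it below -/
import Mathlib

section
/- Let ω ≥ 1 be an integer and δ ∈ (0,1/8) be fixed, and let η > 0. The double series Ω₂(s) = (2 sin(πs)/π) · Σ_{k≥1} Σ_{j≥0} ((s)_j/(j!·4^j)) · (kω)^{-(2s+2j+1)} · ∫_{k^{δ-1}/ω}^{∞} u^{-2s-2j} · A₂(u) du converges absolutely and locally uniformly on the strip {s ∈ ℂ : 1 < Re(s) < 2}, and its sum extends holomorphically to a neighborhood of s = 0; moreover, for fixed ω and δ, as η → 0⁺ one has Ω₂(0) → -1/(12ω) and Ω₂'(0) - (-γ/(6ω) + 1/(12ω) + (log 2)/(6ω) + (log ω)/(6ω) - (log η)/(6ω)) → 0. -/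
open MeasureTheory Filter

/-- The Pochhammer symbol `(s)_j = s(s+1)⋯(s+j-1)`. -/
noncomputable def pochSym (s : ℂ) (j : ℕ) : ℂ := ∏ i ∈ Finset.range j, (s + i)

/-- `A₂(u) = -(cosh(η)·sinh(η)⁴/8) · u³·(1 + u²sinh(η)²)^{-5/2}`. -/
noncomputable def coneA2 (η u : ℝ) : ℝ :=
  -(Real.cosh η * Real.sinh η ^ 4 / 8) *
    (u ^ 3 * (1 + u ^ 2 * Real.sinh η ^ 2) ^ (-(5 : ℝ) / 2))

/-- The `(k,j)`-term of the double series `Ω₂(s)`: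
`(2 sin(πs)/π) · ((s)_j/(j!·4^j)) · (kω)^{-(2s+2j+1)} · ∫_{k^{δ-1}/ω}^∞ u^{-2s-2j}·A₂(u) du`. -/
noncomputable def Omega2Term (ω : ℕ) (η δ : ℝ) (k j : ℕ) (s : ℂ) : ℂ :=
  (2 * Complex.sin ((Real.pi : ℂ) * s) / (Real.pi : ℂ)) *
    (pochSym s j / ((Nat.factorial j : ℂ) * 4 ^ j)) *
    (((k : ℝ) * (ω : ℝ) : ℝ) : ℂ) ^ (-(2 * s + 2 * (j : ℂ) + 1)) *
    ∫ u in Set.Ioi ((k : ℝ) ^ (δ - 1) / ω),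
      (u : ℂ) ^ (-(2 * s) - 2 * (j : ℂ)) * ((coneA2 η u : ℝ) : ℂ)

/-!
Put `τ = s + j`. The integral in a term of `Ω₂` is the full Mellin transform of `A₂` minus an
integral over `(0, k^{δ-1}/ω]`. Summed over `k`, the first part is `ω^{-(2τ+1)} ζ(2τ+1)` times a
quotient of Gamma functions. In the second part the Taylor expansion of `A₂` at `0` produces further
zeta values, with a remainder holomorphic in a half-plane that grows with the order of expansion.
This continues the sum over `k` to all `τ`. The sum over `j` then converges because the coefficients
`(s)_j / (j! 4^j)` decay geometrically while the sum over `k` stays bounded for large `Re τ`.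

At `s = 0` the prefactor `2 sin(πs)/π` vanishes, and so do the coefficients with `j ≥ 1`, so only
`j = 0` contributes to first order; there the pole of `ζ(2s+1)` cancels the zero of the prefactor.
The expansion `ζ(1+ε) = 1/ε + γ + …` and the logarithmic derivatives of the Gamma factors give the
value and the derivative explicitly, up to the integrals over `(0, k^{δ-1}/ω]`, which tend to `0`
with `η` because `A₂ = O(sinh(η)⁴)` on bounded sets.
-/

open Set Topology Asymptotics

/-! ### Two Mellin transforms -/

lemma mellin_indicator (f : ℝ → ℂ) (s : ℂ) {A : Set ℝ} (hA : MeasurableSet A)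
    (hA₀ : A ⊆ Ioi 0) :
    mellin (A.indicator f) s = ∫ u in A, (u : ℂ) ^ (s - 1) * f u := by
  simp only [mellin, smul_eq_mul, ← indicator_mul_right A (fun u : ℝ => (u : ℂ) ^ (s - 1))]
  rw [setIntegral_indicator hA, inter_eq_right.mpr hA₀]

lemma image_div_one_add_Ioi : (fun y : ℝ => y / (1 + y)) '' Ioi 0 = Ioo 0 1 := by
  ext x
  constructor
  · rintro ⟨y, hy : 0 < y, rfl⟩
    have : y / (1 + y) < 1 := (div_lt_one (by positivity)).mpr (by linarith)
    exact ⟨by positivity, this⟩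
  · rintro ⟨hx₀, hx₁⟩
    have : 0 < 1 - x := by linarith
    refine ⟨x / (1 - x), div_pos hx₀ this, ?_⟩
    field_simp
    ring

lemma injOn_div_one_add_Ioi : InjOn (fun y : ℝ => y / (1 + y)) (Ioi 0) := by
  intro x (hx : 0 < x) y (hy : 0 < y) (hxy : x / (1 + x) = y / (1 + y))
  field_simp at hxy
  linarith

lemma hasDerivAt_div_one_add {y : ℝ} (hy : 1 + y ≠ 0) :
    HasDerivAt (fun y : ℝ => y / (1 + y)) (1 / (1 + y) ^ 2) y := by
  simpa using (hasDerivAt_id y).fun_div ((hasDerivAt_id y).const_add 1) hy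

lemma betaIntegrand_div_one_add {y : ℝ} (hy : 0 < y) (w v : ℂ) :
    (1 / (1 + y) ^ 2 : ℝ) • (((y / (1 + y) : ℝ) : ℂ) ^ (w - 1) *
        (1 - ((y / (1 + y) : ℝ) : ℂ)) ^ (v - 1)) =
      (y : ℂ) ^ (w - 1) * ((1 + y : ℝ) : ℂ) ^ (-(w + v)) := by
  have hy₁ : 0 < 1 + y := by linarith
  have hy₁' : ((1 + y : ℝ) : ℂ) ≠ 0 := mod_cast hy₁.ne'
  have inv_cpow (z : ℂ) : (((1 + y)⁻¹ : ℝ) : ℂ) ^ z = ((1 + y : ℝ) : ℂ) ^ (-z) := by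
    rw [Complex.ofReal_inv, Complex.cpow_neg, Complex.inv_cpow]
    exact Complex.arg_ofReal_of_nonneg hy₁.le ▸ Real.pi_pos.ne
  have one_sub : 1 - ((y / (1 + y) : ℝ) : ℂ) = ((1 + y)⁻¹ : ℝ) := by
    rw [← Complex.ofReal_one, ← Complex.ofReal_sub]
    congr 1
    field_simp
    ring
  have inv_sq : ((1 / (1 + y) ^ 2 : ℝ) : ℂ) = ((1 + y : ℝ) : ℂ) ^ (-2 : ℂ) := by
    rw [Complex.cpow_neg]
    simp
  rw [one_sub, Complex.real_smul, inv_sq, div_eq_mul_inv y, Complex.ofReal_mul,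
    Complex.mul_cpow_ofReal_nonneg hy.le (by positivity), inv_cpow, inv_cpow,
    show -(w + v) = -2 + (-(w - 1) + -(v - 1)) by ring, Complex.cpow_add _ _ hy₁',
    Complex.cpow_add _ _ hy₁']
  ring

lemma mellin_one_add_rpow_neg (b : ℝ) (w : ℂ) :
    mellin (fun y : ℝ => (((1 + y) ^ (-b) : ℝ) : ℂ)) w = Complex.betaIntegral w (b - w) := by
  rw [Complex.betaIntegral, intervalIntegral.integral_of_le zero_le_one,
    integral_Ioc_eq_integral_Ioo, ← image_div_one_add_Ioi,
    integral_image_eq_integral_abs_deriv_smul measurableSet_Ioi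
      (fun y (hy : 0 < y) => (hasDerivAt_div_one_add (by positivity)).hasDerivWithinAt)
      injOn_div_one_add_Ioi, mellin]
  refine setIntegral_congr_fun measurableSet_Ioi fun y (hy : 0 < y) => ?_
  rw [abs_of_pos (by positivity), betaIntegrand_div_one_add hy, Complex.ofReal_cpow (by positivity),
    add_sub_cancel, Complex.ofReal_neg, smul_eq_mul]

/-! ### The Riemann zeta function near its pole -/

/-- The entire function `(z - 1) ζ(z)`, with its removable singularity at `1` filled in. -/
noncomputable def subOneMulZeta : ℂ → ℂ :=
  Function.update (fun z => (z - 1) * riemannZeta z) 1 1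

lemma subOneMulZeta_one : subOneMulZeta 1 = 1 := Function.update_self ..

lemma subOneMulZeta_of_ne {z : ℂ} (hz : z ≠ 1) :
    subOneMulZeta z = (z - 1) * riemannZeta z := Function.update_of_ne hz ..

lemma hasDerivAt_subOneMulZeta_one :
    HasDerivAt subOneMulZeta (Real.eulerMascheroniConstant : ℂ) 1 := by
  rw [hasDerivAt_iff_tendsto_slope]
  refine tendsto_riemannZeta_sub_one_div.congr' ?_
  filter_upwards [self_mem_nhdsWithin] with z (hz : z ≠ 1)
  have : z - 1 ≠ 0 := sub_ne_zero.mpr hz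
  rw [slope_def_field, subOneMulZeta_one, subOneMulZeta_of_ne hz]
  field_simp

lemma differentiable_subOneMulZeta : Differentiable ℂ subOneMulZeta := by
  intro z
  rcases eq_or_ne z 1 with rfl | hz
  · exact hasDerivAt_subOneMulZeta_one.differentiableAt
  · have : DifferentiableAt ℂ (fun z => (z - 1) * riemannZeta z) z :=
      (differentiableAt_id.sub_const 1).mul (differentiableAt_riemannZeta hz)
    refine this.congr_of_eventuallyEq ?_
    filter_upwards [isOpen_ne.mem_nhds hz] with y hy using subOneMulZeta_of_ne hy

lemma meromorphic_riemannZeta : Meromorphic riemannZeta := by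
  have hquot : Meromorphic fun z => subOneMulZeta z / (z - 1) := fun z =>
    (differentiable_subOneMulZeta.analyticAt z).meromorphicAt.div (by fun_prop)
  have heq : riemannZeta =
      Function.update (fun z => subOneMulZeta z / (z - 1)) 1 (riemannZeta 1) := by
    refine Function.eq_update_iff.mpr ⟨rfl, fun z hz => ?_⟩
    rw [subOneMulZeta_of_ne hz, mul_div_cancel_left₀ _ (sub_ne_zero.mpr hz)]
  exact heq ▸ fun z => (hquot z).update 1 _

/-! ### Truncated Mellin transforms: the outer series -/

section Outer

variable {ω δ : ℝ} {f : ℝ → ℂ} {k : ℕ}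

/-- The lower limit of integration `k^{δ-1}/ω`. -/
noncomputable def cutoff (ω δ : ℝ) (k : ℕ) : ℝ := (k : ℝ) ^ (δ - 1) / ω

/-- `(kω)^{-(2τ+1)} ∫_{k^{δ-1}/ω}^∞ u^{-2τ} f(u) du`; the terms of `Ω₂` are built from its values at
`τ = s + j`. -/
noncomputable def outerTerm (ω δ : ℝ) (f : ℝ → ℂ) (k : ℕ) (τ : ℂ) : ℂ :=
  ((k * ω : ℝ) : ℂ) ^ (-(2 * τ + 1)) * ∫ u in Ioi (cutoff ω δ k), (u : ℂ) ^ (-(2 * τ)) * f u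

/-- The sum of `outerTerm` over `k ≥ 1`. -/
noncomputable def outerSeries (ω δ : ℝ) (f : ℝ → ℂ) (τ : ℂ) : ℂ :=
  ∑' k : ℕ, outerTerm ω δ f (k + 1) τ

lemma cutoff_pos (hω : 0 < ω) (hk : 0 < k) : 0 < cutoff ω δ k := by
  unfold cutoff
  positivity

lemma cutoff_le_inv (hω : 0 < ω) (hδ : δ ≤ 1) (hk : 0 < k) : cutoff ω δ k ≤ ω⁻¹ := by
  rw [cutoff, div_eq_mul_inv]
  have : (k : ℝ) ^ (δ - 1) ≤ 1 :=
    Real.rpow_le_one_of_one_le_of_nonpos (mod_cast hk) (by linarith)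
  exact mul_le_of_le_one_left (by positivity) this

lemma mul_cutoff (hω : 0 < ω) (hk : 0 < k) : k * ω * cutoff ω δ k = (k : ℝ) ^ δ := by
  rw [cutoff, Real.rpow_sub_one (by positivity)]
  field_simp

lemma one_le_mul_of_cutoff_lt (hω : 0 < ω) (hδ : 0 ≤ δ) (hk : 0 < k) {u : ℝ}
    (hu : cutoff ω δ k < u) : 1 ≤ k * ω * u :=
  calc 1 ≤ (k : ℝ) ^ δ := Real.one_le_rpow (mod_cast hk) hδ
    _ = k * ω * cutoff ω δ k := (mul_cutoff hω hk).symm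
    _ ≤ k * ω * u := by gcongr

lemma outerTerm_eq_mellin (hω : 0 < ω) (hk : 0 < k) (τ : ℂ) :
    outerTerm ω δ f k τ = ((k * ω : ℝ) : ℂ) ^ (-(2 * τ + 1)) *
      mellin ((Ioi (cutoff ω δ k)).indicator f) (1 - 2 * τ) := by
  rw [mellin_indicator _ _ measurableSet_Ioi (Ioi_subset_Ioi (cutoff_pos hω hk).le), outerTerm,
    show 1 - 2 * τ - 1 = -(2 * τ) by ring]

lemma differentiable_cpow_neg_two_mul_add_one {c : ℂ} (hc : c ≠ 0) :
    Differentiable ℂ fun τ : ℂ => c ^ (-(2 * τ + 1)) :=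
  fun _ => DifferentiableAt.const_cpow (by fun_prop) (Or.inl hc)

lemma natCast_mul_ofReal_ne_zero (hω : 0 < ω) (hk : 0 < k) : ((k * ω : ℝ) : ℂ) ≠ 0 :=
  Complex.ofReal_ne_zero.mpr (by positivity)

lemma differentiableAt_outerTerm (hω : 0 < ω) (hk : 0 < k) (hf : Continuous f)
    (hf_top : f =O[atTop] fun u => u⁻¹) {τ : ℂ} (hτ : 0 < τ.re) :
    DifferentiableAt ℂ (outerTerm ω δ f k) τ := by
  have hmellin : DifferentiableAt ℂ (mellin ((Ioi (cutoff ω δ k)).indicator f)) (1 - 2 * τ) := by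
    refine mellin_differentiableAt_of_isBigO_rpow (a := 1) (b := (1 - 2 * τ).re - 1)
      ((hf.locallyIntegrable.indicator measurableSet_Ioi).locallyIntegrableOn _) ?_
      (by simpa using hτ) ?_ (by linarith)
    · refine hf_top.congr' ?_ (.of_forall fun u => (Real.rpow_neg_one u).symm)
      filter_upwards [eventually_gt_atTop (cutoff ω δ k)] with u hu
      rw [indicator_of_mem (mem_Ioi.mpr hu)]
    · refine (isBigO_zero _ _).congr' ?_ EventuallyEq.rfl
      filter_upwards [mem_nhdsWithin_of_mem_nhds (Iio_mem_nhds (cutoff_pos (δ := δ) hω hk))]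
        with u hu
      rw [indicator_of_notMem (notMem_Ioi.mpr (mem_Iio.mp hu).le)]
  rw [funext (outerTerm_eq_mellin hω hk)]
  exact (differentiable_cpow_neg_two_mul_add_one (natCast_mul_ofReal_ne_zero hω hk) τ).mul
    (hmellin.fun_comp' τ (f := fun τ : ℂ => 1 - 2 * τ) (by fun_prop))

lemma mellinConvergent_of_continuous_of_isBigO_inv (hf : Continuous f)
    (hf_top : f =O[atTop] fun u => u⁻¹) {s : ℂ} (hs₀ : 0 < s.re) (hs₁ : s.re < 1) :
    MellinConvergent f s := by
  have hf_zero : f =O[𝓝[>] 0] fun u : ℝ => u ^ (-(0 : ℝ)) := by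
    simpa using (hf.tendsto 0).isBigO_one ℝ |>.mono nhdsWithin_le_nhds
  exact mellinConvergent_of_isBigO_rpow (hf.locallyIntegrable.locallyIntegrableOn _)
    (hf_top.congr_right fun u => (Real.rpow_neg_one u).symm) hs₁ hf_zero hs₀

lemma integrableOn_rpow_mul_norm (hf : Continuous f) (hf_top : f =O[atTop] fun u => u⁻¹)
    {ε : ℝ} (hε₀ : 0 < ε) (hε₁ : ε < 1 / 2) :
    IntegrableOn (fun u : ℝ => u ^ (-(2 * ε)) * ‖f u‖) (Ioi 0) := by
  have hconv : MellinConvergent f ((1 - 2 * ε : ℝ) : ℂ) :=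
    mellinConvergent_of_continuous_of_isBigO_inv hf hf_top
      (by rw [Complex.ofReal_re]; linarith) (by rw [Complex.ofReal_re]; linarith)
  refine IntegrableOn.congr_fun hconv.norm (fun u (hu : 0 < u) => ?_) measurableSet_Ioi
  rw [norm_smul, Complex.norm_cpow_eq_rpow_re_of_pos hu]
  congr 2
  simp

/-- Here the cutoff enters: `kωu ≥ 1` on the domain of integration, so the left-hand side decreases
in `Re τ`. -/
lemma norm_outerIntegrand_le (hω : 0 < ω) (hδ : 0 ≤ δ) (hk : 0 < k) {ε : ℝ} {τ : ℂ}
    (hτ : ε ≤ τ.re) {u : ℝ} (hu : cutoff ω δ k < u) :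
    ‖((k * ω : ℝ) : ℂ) ^ (-(2 * τ + 1)) * ((u : ℂ) ^ (-(2 * τ)) * f u)‖ ≤
      (k * ω : ℝ) ^ (-(1 + 2 * ε)) * (u ^ (-(2 * ε)) * ‖f u‖) := by
  have hu₀ : 0 < u := (cutoff_pos hω hk).trans hu
  have hkω : 0 < k * ω := by positivity
  have hmono : (k * ω * u) ^ (-(2 * τ.re)) ≤ (k * ω * u) ^ (-(2 * ε)) :=
    Real.rpow_le_rpow_of_exponent_le (one_le_mul_of_cutoff_lt hω hδ hk hu) (by linarith)
  have hsplit (σ : ℝ) : (k * ω) ^ (-(1 + 2 * σ)) * u ^ (-(2 * σ)) =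
      (k * ω) ^ (-1 : ℝ) * (k * ω * u) ^ (-(2 * σ)) := by
    rw [Real.mul_rpow hkω.le hu₀.le, ← mul_assoc, ← Real.rpow_add hkω, neg_add]
  rw [norm_mul, norm_mul, Complex.norm_cpow_eq_rpow_re_of_pos hkω,
    Complex.norm_cpow_eq_rpow_re_of_pos hu₀, ← mul_assoc, ← mul_assoc, hsplit,
    show (-(2 * τ + 1)).re = -(1 + 2 * τ.re) by simp; ring,
    show (-(2 * τ)).re = -(2 * τ.re) by simp, hsplit]
  gcongr

lemma norm_outerTerm_le (hω : 0 < ω) (hδ : 0 ≤ δ) (hk : 0 < k) (hf : Continuous f)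
    (hf_top : f =O[atTop] fun u => u⁻¹) {ε : ℝ} (hε₀ : 0 < ε) (hε₁ : ε < 1 / 2) {τ : ℂ}
    (hτ : ε ≤ τ.re) :
    ‖outerTerm ω δ f k τ‖ ≤
      (k * ω : ℝ) ^ (-(1 + 2 * ε)) * ∫ u in Ioi 0, u ^ (-(2 * ε)) * ‖f u‖ := by
  have hint := integrableOn_rpow_mul_norm hf hf_top hε₀ hε₁
  have hsub : Ioi (cutoff ω δ k) ⊆ Ioi 0 := Ioi_subset_Ioi (cutoff_pos hω hk).le
  have hnonneg : ∀ u ∈ Ioi (0 : ℝ), 0 ≤ u ^ (-(2 * ε)) * ‖f u‖ := fun u (hu : 0 < u) => by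
    positivity
  rw [outerTerm, ← integral_const_mul]
  calc _ ≤ ∫ u in Ioi (cutoff ω δ k),
          (k * ω : ℝ) ^ (-(1 + 2 * ε)) * (u ^ (-(2 * ε)) * ‖f u‖) :=
        norm_integral_le_of_norm_le ((hint.mono_set hsub).const_mul _)
          ((ae_restrict_mem measurableSet_Ioi).mono fun u hu =>
            norm_outerIntegrand_le hω hδ hk hτ hu)
    _ = (k * ω : ℝ) ^ (-(1 + 2 * ε)) *
          ∫ u in Ioi (cutoff ω δ k), u ^ (-(2 * ε)) * ‖f u‖ := integral_const_mul _ _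
    _ ≤ _ := by
        gcongr ?_ * ?_
        exact setIntegral_mono_set hint
          ((ae_restrict_mem measurableSet_Ioi).mono hnonneg) hsub.eventuallyLE

lemma summable_natCast_add_one_rpow {p : ℝ} (hp : 1 < p) :
    Summable fun k : ℕ => ((k + 1 : ℕ) : ℝ) ^ (-p) :=
  (summable_nat_add_iff 1).mpr (Real.summable_nat_rpow.mpr (by linarith))

lemma exists_summable_bound_outerTerm (hω : 0 < ω) (hδ : 0 ≤ δ) (hf : Continuous f)
    (hf_top : f =O[atTop] fun u => u⁻¹) {ε : ℝ} (hε : 0 < ε) :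
    ∃ b : ℕ → ℝ, Summable b ∧ ∀ k τ, ε ≤ τ.re → ‖outerTerm ω δ f (k + 1) τ‖ ≤ b k := by
  have hε₀ : 0 < min ε (1 / 4) := by positivity
  have hε₁ : min ε (1 / 4) < 1 / 2 := (min_le_right _ _).trans_lt (by norm_num)
  refine ⟨_, ?_, fun k τ hτ => norm_outerTerm_le hω hδ k.succ_pos hf hf_top hε₀ hε₁
    ((min_le_left _ _).trans hτ)⟩
  simp_rw [Real.mul_rpow (Nat.cast_nonneg _) hω.le]
  exact ((summable_natCast_add_one_rpow (by linarith)).mul_right _).mul_right _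

lemma differentiableAt_outerSeries (hω : 0 < ω) (hδ : 0 ≤ δ) (hf : Continuous f)
    (hf_top : f =O[atTop] fun u => u⁻¹) {τ : ℂ} (hτ : 0 < τ.re) :
    DifferentiableAt ℂ (outerSeries ω δ f) τ := by
  have hτ₂ : 0 < τ.re / 2 := by positivity
  obtain ⟨b, hb, hle⟩ := exists_summable_bound_outerTerm hω hδ hf hf_top hτ₂
  have hopen : IsOpen {s : ℂ | τ.re / 2 < s.re} := isOpen_lt continuous_const Complex.continuous_re
  exact (Complex.differentiableOn_tsum_of_summable_norm hb
    (fun k s hs => (differentiableAt_outerTerm hω k.succ_pos hf hf_top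
      (hτ₂.trans hs)).differentiableWithinAt) hopen
    fun k s hs => hle k s (le_of_lt hs)).differentiableAt (hopen.mem_nhds (half_lt_self hτ))

lemma exists_norm_outerSeries_le (hω : 0 < ω) (hδ : 0 ≤ δ) (hf : Continuous f)
    (hf_top : f =O[atTop] fun u => u⁻¹) {ε : ℝ} (hε : 0 < ε) :
    ∃ B, ∀ τ : ℂ, ε ≤ τ.re → ‖outerSeries ω δ f τ‖ ≤ B := by
  obtain ⟨b, hb, hle⟩ := exists_summable_bound_outerTerm hω hδ hf hf_top hε
  exact ⟨_, fun τ hτ => tsum_of_norm_bounded hb.hasSum fun k => hle k τ hτ⟩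

end Outer

/-! ### Truncated Mellin transforms: the inner series -/

section MellinIoc

variable {g : ℝ → ℂ} {a K : ℝ} {n : ℕ} {s : ℂ}

lemma isBigO_nhdsGT_zero_indicator_Ioc (hbound : ∀ u ∈ Ioc 0 a, ‖g u‖ ≤ K * u ^ n) :
    (Ioc 0 a).indicator g =O[𝓝[>] 0] fun u : ℝ => u ^ (-(-n : ℝ)) := by
  refine IsBigO.of_bound |K| ?_
  filter_upwards [self_mem_nhdsWithin] with u (hu : 0 < u)
  rw [neg_neg, Real.rpow_natCast, Real.norm_of_nonneg (by positivity)]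
  by_cases hua : u ∈ Ioc 0 a
  · rw [indicator_of_mem hua]
    exact (hbound u hua).trans (by gcongr; exact le_abs_self K)
  · rw [indicator_of_notMem hua, norm_zero]
    positivity

lemma isBigO_atTop_indicator_Ioc (g : ℝ → ℂ) (a b : ℝ) :
    (Ioc 0 a).indicator g =O[atTop] fun u : ℝ => u ^ (-b) := by
  refine (isBigO_zero _ _).congr' ?_ EventuallyEq.rfl
  filter_upwards [eventually_gt_atTop a] with u hu
  rw [indicator_of_notMem fun h => hu.not_ge h.2]

lemma mellinConvergent_indicator_Ioc (hg : Continuous g)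
    (hbound : ∀ u ∈ Ioc 0 a, ‖g u‖ ≤ K * u ^ n) (hs : -(n : ℝ) < s.re) :
    MellinConvergent ((Ioc 0 a).indicator g) s :=
  mellinConvergent_of_isBigO_rpow
    ((hg.locallyIntegrable.indicator measurableSet_Ioc).locallyIntegrableOn _)
    (isBigO_atTop_indicator_Ioc g a (s.re + 1)) (by linarith)
    (isBigO_nhdsGT_zero_indicator_Ioc hbound) hs

lemma differentiableAt_mellin_indicator_Ioc (hg : Continuous g)
    (hbound : ∀ u ∈ Ioc 0 a, ‖g u‖ ≤ K * u ^ n) (hs : -(n : ℝ) < s.re) :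
    DifferentiableAt ℂ (mellin ((Ioc 0 a).indicator g)) s :=
  mellin_differentiableAt_of_isBigO_rpow
    ((hg.locallyIntegrable.indicator measurableSet_Ioc).locallyIntegrableOn _)
    (isBigO_atTop_indicator_Ioc g a (s.re + 1)) (by linarith)
    (isBigO_nhdsGT_zero_indicator_Ioc hbound) hs

lemma norm_mellin_indicator_Ioc_le (ha : 0 < a) (hbound : ∀ u ∈ Ioc 0 a, ‖g u‖ ≤ K * u ^ n)
    (hs : 0 < n + s.re) :
    ‖mellin ((Ioc 0 a).indicator g) s‖ ≤ K * (a ^ (n + s.re) / (n + s.re)) := by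
  have hint : IntervalIntegrable (fun u : ℝ => u ^ (n + s.re - 1)) volume 0 a :=
    intervalIntegral.intervalIntegrable_rpow' (by linarith)
  rw [intervalIntegrable_iff_integrableOn_Ioc_of_le ha.le] at hint
  have hle : ∀ u ∈ Ioc 0 a, ‖(u : ℂ) ^ (s - 1) * g u‖ ≤ K * u ^ (n + s.re - 1) := by
    intro u hu
    have hu₀ : 0 < u := hu.1
    calc ‖(u : ℂ) ^ (s - 1) * g u‖ ≤ u ^ (s.re - 1) * (K * u ^ n) := by
          rw [norm_mul, Complex.norm_cpow_eq_rpow_re_of_pos hu₀, Complex.sub_re, Complex.one_re]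
          gcongr
          exact hbound u hu
      _ = K * u ^ (n + s.re - 1) := by
          rw [add_sub_assoc, Real.rpow_add hu₀, Real.rpow_natCast]
          ring
  rw [mellin_indicator _ _ measurableSet_Ioc fun _ hu => hu.1]
  calc _ ≤ ∫ u in Ioc 0 a, K * u ^ (n + s.re - 1) :=
        norm_integral_le_of_norm_le (hint.const_mul K)
          ((ae_restrict_mem measurableSet_Ioc).mono hle)
    _ = K * ∫ u in (0 : ℝ)..a, u ^ (n + s.re - 1) := by
        rw [integral_const_mul, intervalIntegral.integral_of_le ha.le]
    _ = _ := by
        rw [integral_rpow (Or.inl (by linarith)), sub_add_cancel, Real.zero_rpow hs.ne', sub_zero]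

lemma mellin_indicator_Ioc_pow (ha : 0 < a) (hs : 0 < n + s.re) :
    mellin ((Ioc 0 a).indicator fun u : ℝ => (u : ℂ) ^ n) s = (a : ℂ) ^ (n + s) / (n + s) := by
  have hne : (n : ℂ) + s ≠ 0 := fun h => hs.ne' (by simpa using congrArg Complex.re h)
  rw [mellin_indicator _ _ measurableSet_Ioc fun _ hu => hu.1]
  calc _ = ∫ u in Ioc 0 a, (u : ℂ) ^ (n + s - 1) := by
        refine setIntegral_congr_fun measurableSet_Ioc fun u hu => ?_
        have hu₀ : (u : ℂ) ≠ 0 := Complex.ofReal_ne_zero.mpr hu.1.ne'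
        rw [add_sub_assoc, Complex.cpow_add _ _ hu₀, Complex.cpow_natCast, mul_comm]
    _ = (a : ℂ) ^ (n + s) / (n + s) := by
        rw [← intervalIntegral.integral_of_le ha.le, integral_cpow (Or.inl (by simpa using hs)),
          sub_add_cancel, Complex.ofReal_zero, Complex.zero_cpow hne, sub_zero]

end MellinIoc

section Inner

open scoped Nat

variable {ω δ : ℝ} {f : ℝ → ℂ} {n k : ℕ} {τ : ℂ}

/-- The `n`-th Taylor coefficient of `f` at `0`. -/
noncomputable def taylorCoeff (f : ℝ → ℂ) (n : ℕ) : ℂ := (n ! : ℝ)⁻¹ • iteratedDeriv n f 0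

/-- `f` minus the first `n` terms of its Taylor expansion at `0`. -/
noncomputable def taylorRemainder (f : ℝ → ℂ) (n : ℕ) (u : ℝ) : ℂ :=
  f u - ∑ i ∈ Finset.range n, taylorCoeff f i * (u : ℂ) ^ i

lemma taylorRemainder_zero (f : ℝ → ℂ) : taylorRemainder f 0 = f := by
  ext u
  simp [taylorRemainder]

lemma taylorRemainder_eq_add_succ (f : ℝ → ℂ) (n : ℕ) (u : ℝ) :
    taylorRemainder f n u = taylorCoeff f n * (u : ℂ) ^ n + taylorRemainder f (n + 1) u := by
  simp only [taylorRemainder, Finset.sum_range_succ]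
  ring

lemma continuous_taylorRemainder (hf : Continuous f) (n : ℕ) :
    Continuous (taylorRemainder f n) := by
  unfold taylorRemainder
  fun_prop

lemma exists_norm_taylorRemainder_le (hf : ∀ m : ℕ, ContDiff ℝ m f) (n : ℕ) {b : ℝ} (hb : 0 < b) :
    ∃ K, ∀ u ∈ Icc 0 b, ‖taylorRemainder f n u‖ ≤ K * u ^ n := by
  cases n with
  | zero =>
    obtain ⟨K, hK⟩ := isCompact_Icc.exists_bound_of_continuousOn (s := Icc 0 b)
      (hf 0).continuous.continuousOn
    exact ⟨K, by simpa [taylorRemainder_zero] using hK⟩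
  | succ n =>
    obtain ⟨K, hK⟩ := exists_taylor_mean_remainder_bound (n := n) hb.le
      (mod_cast (hf (n + 1)).contDiffOn (s := Icc 0 b))
    refine ⟨K, fun u hu => ?_⟩
    have heval : taylorWithinEval f n (Icc 0 b) 0 u =
        ∑ i ∈ Finset.range (n + 1), taylorCoeff f i * (u : ℂ) ^ i := by
      rw [taylor_within_apply]
      refine Finset.sum_congr rfl fun i _ => ?_
      rw [iteratedDerivWithin_eq_iteratedDeriv (uniqueDiffOn_Icc hb)
        (hf i).contDiffAt ⟨le_rfl, hb.le⟩, sub_zero, taylorCoeff]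
      simp only [Complex.real_smul]
      push_cast
      ring
    simpa only [taylorRemainder, heval, sub_zero] using hK u hu

/-- The exponent in `k^{-(1 + (1-δ)(n+1) + 2δτ)}`, the dependence on `k` of the contribution of
`u^n` to the integral below the cutoff. -/
noncomputable def innerExponent (δ : ℝ) (n : ℕ) (τ : ℂ) : ℂ :=
  1 + (1 - δ) * (n + 1) + 2 * δ * τ

/-- `(kω)^{-(2τ+1)}` times the integral of `u^{-2τ}` against the `n`-th Taylor remainder of `f` over
the interval below the cutoff. -/
noncomputable def innerTerm (ω δ : ℝ) (f : ℝ → ℂ) (n k : ℕ) (τ : ℂ) : ℂ :=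
  ((k * ω : ℝ) : ℂ) ^ (-(2 * τ + 1)) *
    mellin ((Ioc 0 (cutoff ω δ k)).indicator (taylorRemainder f n)) (1 - 2 * τ)

/-- The sum of `innerTerm` over `k ≥ 1`. -/
noncomputable def innerSeries (ω δ : ℝ) (f : ℝ → ℂ) (n : ℕ) (τ : ℂ) : ℂ :=
  ∑' k : ℕ, innerTerm ω δ f n (k + 1) τ

/-- The set where the integrals and the sum defining `innerSeries` converge: the first condition is
for the integrals at `u = 0`, the second one for the sum over `k`. -/
def innerDomain (δ : ℝ) (n : ℕ) : Set ℂ :=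
  {τ | 2 * τ.re < n + 1} ∩ {τ | 1 < (innerExponent δ n τ).re}

/-- The part of `innerSeries` which comes from the Taylor term `u^n` of `f`. -/
noncomputable def taylorTerm (ω δ : ℝ) (f : ℝ → ℂ) (n : ℕ) (τ : ℂ) : ℂ :=
  taylorCoeff f n * (ω : ℂ) ^ (-(n + 2) : ℂ) / (n + 1 - 2 * τ) * riemannZeta (innerExponent δ n τ)

lemma innerExponent_re (δ : ℝ) (n : ℕ) (τ : ℂ) :
    (innerExponent δ n τ).re = 1 + (1 - δ) * (n + 1) + 2 * δ * τ.re := by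
  simp [innerExponent]

lemma continuous_innerExponent_re (δ : ℝ) (n : ℕ) :
    Continuous fun τ => (innerExponent δ n τ).re := by
  simp only [innerExponent_re]
  fun_prop

lemma isOpen_innerDomain (δ : ℝ) (n : ℕ) : IsOpen (innerDomain δ n) :=
  (isOpen_lt (by fun_prop) continuous_const).inter
    (isOpen_lt continuous_const (continuous_innerExponent_re δ n))

lemma innerDomain_mono (hδ : δ ≤ 1) : Monotone (innerDomain δ) := by
  intro m n hmn τ ⟨(hτ₁ : 2 * τ.re < m + 1), (hτ₂ : 1 < (innerExponent δ m τ).re)⟩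
  have hmn' : (m : ℝ) ≤ n := mod_cast hmn
  rw [innerExponent_re] at hτ₂
  refine ⟨show 2 * τ.re < n + 1 by linarith, ?_⟩
  change 1 < (innerExponent δ n τ).re
  rw [innerExponent_re]
  nlinarith [mul_le_mul_of_nonneg_left hmn' (sub_nonneg.mpr hδ)]

lemma ofReal_cpow_eq_exp {x : ℝ} (hx : 0 < x) (z : ℂ) :
    (x : ℂ) ^ z = Complex.exp (Real.log x * z) := by
  rw [Complex.cpow_def_of_ne_zero (Complex.ofReal_ne_zero.mpr hx.ne'), Complex.ofReal_log hx.le]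

lemma cpow_mul_cutoff_cpow (hω : 0 < ω) (hk : 0 < k) (n : ℕ) (τ : ℂ) :
    ((k * ω : ℝ) : ℂ) ^ (-(2 * τ + 1)) * (cutoff ω δ k : ℂ) ^ (n + (1 - 2 * τ)) =
      (ω : ℂ) ^ (-(n + 2) : ℂ) * (k : ℂ) ^ (-innerExponent δ n τ) := by
  have hk' : (0 : ℝ) < k := mod_cast hk
  rw [← Complex.ofReal_natCast k, ofReal_cpow_eq_exp (by positivity),
    ofReal_cpow_eq_exp (cutoff_pos hω hk), ofReal_cpow_eq_exp hω, ofReal_cpow_eq_exp hk',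
    ← Complex.exp_add, ← Complex.exp_add, cutoff, Real.log_div (by positivity) hω.ne',
    Real.log_rpow hk', Real.log_mul hk'.ne' hω.ne', innerExponent]
  congr 1
  push_cast
  ring

lemma norm_innerTerm_le (hω : 0 < ω) (hδ : δ ≤ 1) (hk : 0 < k) {K : ℝ}
    (hK : ∀ u ∈ Icc 0 ω⁻¹, ‖taylorRemainder f n u‖ ≤ K * u ^ n) {c : ℝ} (hc : 0 < c)
    (hτ₁ : c ≤ n + 1 - 2 * τ.re) (hτ₂ : 1 + c ≤ (innerExponent δ n τ).re) :
    ‖innerTerm ω δ f n k τ‖ ≤ K * ω ^ (-(n + 2) : ℝ) / c * (k : ℝ) ^ (-(1 + c)) := by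
  have ha : 0 < cutoff ω δ k := cutoff_pos hω hk
  have hKnonneg : 0 ≤ K := nonneg_of_mul_nonneg_left
    ((norm_nonneg _).trans (hK _ ⟨by positivity, le_rfl⟩)) (by positivity)
  have hre : n + (1 - 2 * τ).re = n + 1 - 2 * τ.re := by
    simp [add_sub_assoc]
  have hmellin := norm_mellin_indicator_Ioc_le (s := 1 - 2 * τ) ha
    (fun u hu => hK u ⟨hu.1.le, hu.2.trans (cutoff_le_inv hω hδ hk)⟩) (by linarith)
  have hpow : ‖((k * ω : ℝ) : ℂ) ^ (-(2 * τ + 1))‖ * cutoff ω δ k ^ (n + (1 - 2 * τ).re) =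
      ω ^ (-(n + 2) : ℝ) * (k : ℝ) ^ (-(innerExponent δ n τ).re) := by
    have h := congrArg norm (cpow_mul_cutoff_cpow (δ := δ) hω hk n τ)
    rw [norm_mul, norm_mul, Complex.norm_cpow_eq_rpow_re_of_pos ha,
      Complex.norm_cpow_eq_rpow_re_of_pos hω, Complex.norm_natCast_cpow_of_pos hk] at h
    simpa using h
  calc ‖innerTerm ω δ f n k τ‖
    _ ≤ ‖((k * ω : ℝ) : ℂ) ^ (-(2 * τ + 1))‖ *
          (K * (cutoff ω δ k ^ (n + (1 - 2 * τ).re) / (n + (1 - 2 * τ).re))) := by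
        rw [innerTerm, norm_mul]
        gcongr
    _ = K * (ω ^ (-(n + 2) : ℝ) * (k : ℝ) ^ (-(innerExponent δ n τ).re)) /
          (n + 1 - 2 * τ.re) := by
        rw [← hpow, hre]
        ring
    _ ≤ K * (ω ^ (-(n + 2) : ℝ) * (k : ℝ) ^ (-(1 + c))) / c := by
        gcongr
        exact mod_cast hk
    _ = _ := by ring

lemma differentiableAt_innerTerm (hω : 0 < ω) (hδ : δ ≤ 1)
    (hf : ∀ m : ℕ, ContDiff ℝ m f) (hk : 0 < k) (hτ : 2 * τ.re < n + 1) :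
    DifferentiableAt ℂ (innerTerm ω δ f n k) τ := by
  obtain ⟨K, hK⟩ := exists_norm_taylorRemainder_le hf n (inv_pos.mpr hω)
  have hmellin : DifferentiableAt ℂ
      (mellin ((Ioc 0 (cutoff ω δ k)).indicator (taylorRemainder f n))) (1 - 2 * τ) :=
    differentiableAt_mellin_indicator_Ioc (continuous_taylorRemainder (hf 0).continuous n)
      (fun u hu => hK u ⟨hu.1.le, hu.2.trans (cutoff_le_inv hω hδ hk)⟩) (by simp; linarith)
  exact (differentiable_cpow_neg_two_mul_add_one (natCast_mul_ofReal_ne_zero hω hk) τ).mul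
    (hmellin.fun_comp' τ (f := fun τ : ℂ => 1 - 2 * τ) (by fun_prop))

lemma exists_isOpen_summable_bound_innerTerm (hω : 0 < ω) (hδ : δ ≤ 1)
    (hf : ∀ m : ℕ, ContDiff ℝ m f) (hτ : τ ∈ innerDomain δ n) :
    ∃ V, IsOpen V ∧ τ ∈ V ∧ V ⊆ innerDomain δ n ∧ ∃ b : ℕ → ℝ, Summable b ∧
      ∀ k, ∀ s ∈ V, ‖innerTerm ω δ f n (k + 1) s‖ ≤ b k := by
  obtain ⟨K, hK⟩ := exists_norm_taylorRemainder_le hf n (inv_pos.mpr hω)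
  obtain ⟨c, hc, hlt⟩ : ∃ c, 0 < c ∧ c < min (n + 1 - 2 * τ.re) ((innerExponent δ n τ).re - 1) :=
    exists_between (lt_min (sub_pos.mpr hτ.1) (sub_pos.mpr hτ.2))
  obtain ⟨hc₁, hc₂⟩ := lt_min_iff.mp hlt
  refine ⟨{s | c < n + 1 - 2 * s.re} ∩ {s | 1 + c < (innerExponent δ n s).re},
    (isOpen_lt continuous_const (by fun_prop)).inter
      (isOpen_lt continuous_const (continuous_innerExponent_re δ n)),
    ⟨hc₁, lt_sub_iff_add_lt'.mp hc₂⟩, fun s hs => ?_, _,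
    (summable_natCast_add_one_rpow (by linarith)).mul_left _,
    fun k s hs => norm_innerTerm_le hω hδ k.succ_pos hK hc hs.1.le hs.2.le⟩
  have hs₁ : c < n + 1 - 2 * s.re := hs.1
  have hs₂ : 1 + c < (innerExponent δ n s).re := hs.2
  exact ⟨show 2 * s.re < n + 1 by linarith, show 1 < (innerExponent δ n s).re by linarith⟩

lemma summable_innerTerm (hω : 0 < ω) (hδ : δ ≤ 1) (hf : ∀ m : ℕ, ContDiff ℝ m f)
    (hτ : τ ∈ innerDomain δ n) : Summable fun k : ℕ => innerTerm ω δ f n (k + 1) τ := by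
  obtain ⟨V, -, hτV, -, b, hb, hle⟩ := exists_isOpen_summable_bound_innerTerm hω hδ hf hτ
  exact .of_norm_bounded hb fun k => hle k τ hτV

lemma differentiableAt_innerSeries (hω : 0 < ω) (hδ : δ ≤ 1) (hf : ∀ m : ℕ, ContDiff ℝ m f)
    (hτ : τ ∈ innerDomain δ n) : DifferentiableAt ℂ (innerSeries ω δ f n) τ := by
  obtain ⟨V, hV, hτV, hVsub, b, hb, hle⟩ := exists_isOpen_summable_bound_innerTerm hω hδ hf hτ
  exact (Complex.differentiableOn_tsum_of_summable_norm hb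
    (fun k s hs => (differentiableAt_innerTerm hω hδ hf k.succ_pos
      (hVsub hs).1).differentiableWithinAt) hV hle).differentiableAt (hV.mem_nhds hτV)

lemma innerTerm_eq_add_succ (hω : 0 < ω) (hδ : δ ≤ 1)
    (hf : ∀ m : ℕ, ContDiff ℝ m f) (hk : 0 < k) (hτ : 2 * τ.re < n + 1) :
    innerTerm ω δ f n k τ =
      taylorCoeff f n * (ω : ℂ) ^ (-(n + 2) : ℂ) / (n + 1 - 2 * τ) *
        (k : ℂ) ^ (-innerExponent δ n τ) + innerTerm ω δ f (n + 1) k τ := by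
  obtain ⟨K, hK⟩ := exists_norm_taylorRemainder_le hf (n + 1) (inv_pos.mpr hω)
  have hpow : MellinConvergent ((Ioc 0 (cutoff ω δ k)).indicator fun u : ℝ => (u : ℂ) ^ n)
      (1 - 2 * τ) :=
    mellinConvergent_indicator_Ioc (K := 1) (n := n) (by fun_prop)
      (fun u hu => by simp [abs_of_pos hu.1]) (by simp; linarith)
  have hrem : MellinConvergent
      ((Ioc 0 (cutoff ω δ k)).indicator (taylorRemainder f (n + 1))) (1 - 2 * τ) :=
    mellinConvergent_indicator_Ioc (continuous_taylorRemainder (hf 0).continuous _)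
      (fun u hu => hK u ⟨hu.1.le, hu.2.trans (cutoff_le_inv hω hδ hk)⟩) (by simp; linarith)
  have hsplit : (Ioc 0 (cutoff ω δ k)).indicator (taylorRemainder f n) = fun u =>
      taylorCoeff f n • (Ioc 0 (cutoff ω δ k)).indicator (fun u : ℝ => (u : ℂ) ^ n) u +
        (Ioc 0 (cutoff ω δ k)).indicator (taylorRemainder f (n + 1)) u := by
    ext u
    by_cases hu : u ∈ Ioc 0 (cutoff ω δ k) <;>
      simp [hu, taylorRemainder_eq_add_succ f n u]
  rw [innerTerm, hsplit, (hasMellin_add (hpow.const_smul _) hrem).2, mellin_const_smul,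
    mellin_indicator_Ioc_pow (cutoff_pos hω hk) (by simp; linarith), innerTerm, smul_eq_mul]
  rw [show (n + 1 - 2 * τ : ℂ) = n + (1 - 2 * τ) by ring]
  linear_combination (taylorCoeff f n / (n + (1 - 2 * τ))) *
    cpow_mul_cutoff_cpow (δ := δ) hω hk n τ

lemma hasSum_natCast_add_one_cpow_neg {z : ℂ} (hz : 1 < z.re) :
    HasSum (fun k : ℕ => ((k + 1 : ℕ) : ℂ) ^ (-z)) (riemannZeta z) := by
  have hsum := (summable_nat_add_iff 1).mpr (Complex.summable_one_div_nat_cpow.mpr hz)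
  simpa only [zeta_eq_tsum_one_div_nat_add_one_cpow hz, one_div, Complex.cpow_neg,
    Nat.cast_add_one] using hsum.hasSum

lemma innerSeries_eq_add_succ (hω : 0 < ω) (hδ : δ ≤ 1) (hf : ∀ m : ℕ, ContDiff ℝ m f)
    (hτ : τ ∈ innerDomain δ n) :
    innerSeries ω δ f n τ = taylorTerm ω δ f n τ + innerSeries ω δ f (n + 1) τ := by
  have hsum := summable_innerTerm hω hδ hf (innerDomain_mono hδ n.le_succ hτ)
  have hzeta := (hasSum_natCast_add_one_cpow_neg hτ.2).mul_left
    (taylorCoeff f n * (ω : ℂ) ^ (-(n + 2) : ℂ) / (n + 1 - 2 * τ))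
  rw [innerSeries,
    tsum_congr fun k => innerTerm_eq_add_succ (k := k + 1) hω hδ hf k.succ_pos hτ.1]
  exact (hzeta.add hsum.hasSum).tsum_eq

end Inner

/-! ### Meromorphic continuation of the outer series -/

section Continuation

variable {ω δ : ℝ} {f : ℝ → ℂ} {G : ℂ → ℂ} {τ : ℂ}

lemma outerTerm_eq_sub_innerTerm (hω : 0 < ω) (hδ : δ ≤ 1) (hf : ∀ m : ℕ, ContDiff ℝ m f)
    (hf_top : f =O[atTop] fun u => u⁻¹) {k : ℕ} (hk : 0 < k) (hτ₀ : 0 < τ.re)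
    (hτ₁ : τ.re < 1 / 2) :
    outerTerm ω δ f k τ =
      ((k * ω : ℝ) : ℂ) ^ (-(2 * τ + 1)) * mellin f (1 - 2 * τ) - innerTerm ω δ f 0 k τ := by
  obtain ⟨K, hK⟩ := exists_norm_taylorRemainder_le hf 0 (inv_pos.mpr hω)
  rw [taylorRemainder_zero] at hK
  have hre : (1 - 2 * τ).re = 1 - 2 * τ.re := by simp
  have hmellin : MellinConvergent f (1 - 2 * τ) :=
    mellinConvergent_of_continuous_of_isBigO_inv (hf 0).continuous hf_top
      (by linarith) (by linarith)
  have hinner : MellinConvergent ((Ioc 0 (cutoff ω δ k)).indicator f) (1 - 2 * τ) :=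
    mellinConvergent_indicator_Ioc (hf 0).continuous
      (fun u hu => hK u ⟨hu.1.le, hu.2.trans (cutoff_le_inv hω hδ hk)⟩)
      (by rw [hre, Nat.cast_zero]; linarith)
  have hsplit : mellin ((Ioi (cutoff ω δ k)).indicator f) (1 - 2 * τ) =
      mellin f (1 - 2 * τ) - mellin ((Ioc 0 (cutoff ω δ k)).indicator f) (1 - 2 * τ) := by
    rw [← (hasMellin_sub hmellin hinner).2]
    refine setIntegral_congr_fun measurableSet_Ioi fun u (hu : 0 < u) => ?_
    rcases lt_or_ge (cutoff ω δ k) u with huk | huk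
    · simp [huk, hu]
    · simp [huk, hu]
  rw [outerTerm_eq_mellin hω hk, hsplit, innerTerm, taylorRemainder_zero, mul_sub]

/-- The analytic continuation of `outerSeries` to `innerDomain δ N` up to poles, where `G` is the
continuation of `τ ↦ mellin f (1 - 2τ)`: the integral from `0` to `∞` minus the integral below the
cutoff, in which `N` Taylor terms of `f` have been summed over `k` in closed form. -/
noncomputable def continuationAt (ω δ : ℝ) (f : ℝ → ℂ) (G : ℂ → ℂ) (N : ℕ) (τ : ℂ) : ℂ :=
  (ω : ℂ) ^ (-(2 * τ + 1)) * riemannZeta (2 * τ + 1) * G τ -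
    ∑ n ∈ Finset.range N, taylorTerm ω δ f n τ - innerSeries ω δ f N τ

lemma mem_innerDomain_zero (hδ₀ : 0 ≤ δ) (hδ₁ : δ < 1) (hτ₀ : 0 ≤ τ.re) (hτ₁ : τ.re < 1 / 2) :
    τ ∈ innerDomain δ 0 := by
  have h₁ : 2 * τ.re < (0 : ℕ) + 1 := by rw [Nat.cast_zero]; linarith
  have h₂ : 1 < (innerExponent δ 0 τ).re := by
    rw [innerExponent_re, Nat.cast_zero]
    nlinarith [mul_nonneg hδ₀ hτ₀]
  exact ⟨h₁, h₂⟩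

lemma outerSeries_eq_continuationAt_zero (hω : 0 < ω) (hδ₀ : 0 ≤ δ) (hδ₁ : δ < 1)
    (hf : ∀ m : ℕ, ContDiff ℝ m f) (hf_top : f =O[atTop] fun u => u⁻¹)
    (hG : ∀ τ : ℂ, 0 < τ.re → τ.re < 1 / 2 → mellin f (1 - 2 * τ) = G τ)
    (hτ₀ : 0 < τ.re) (hτ₁ : τ.re < 1 / 2) :
    outerSeries ω δ f τ = continuationAt ω δ f G 0 τ := by
  have hzeta : HasSum (fun k : ℕ => (((k + 1 : ℕ) * ω : ℝ) : ℂ) ^ (-(2 * τ + 1)))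
      (riemannZeta (2 * τ + 1) * (ω : ℂ) ^ (-(2 * τ + 1))) := by
    simp_rw [Complex.ofReal_mul, Complex.mul_cpow_ofReal_nonneg (Nat.cast_nonneg _) hω.le,
      Complex.ofReal_natCast]
    exact (hasSum_natCast_add_one_cpow_neg (by simpa using hτ₀)).mul_right _
  have hinner := (summable_innerTerm hω hδ₁.le hf
    (mem_innerDomain_zero hδ₀ hδ₁ hτ₀.le hτ₁)).hasSum
  rw [outerSeries, tsum_congr fun k => outerTerm_eq_sub_innerTerm (k := k + 1) hω hδ₁.le hf hf_top
    k.succ_pos hτ₀ hτ₁, ((hzeta.mul_right _).sub hinner).tsum_eq, hG τ hτ₀ hτ₁, continuationAt,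
    Finset.sum_range_zero, innerSeries]
  ring

lemma continuationAt_eq_of_le (hω : 0 < ω) (hδ : δ ≤ 1) (hf : ∀ m : ℕ, ContDiff ℝ m f)
    {M N : ℕ} (hMN : M ≤ N) (hτ : τ ∈ innerDomain δ M) :
    continuationAt ω δ f G M τ = continuationAt ω δ f G N τ := by
  induction N, hMN using Nat.le_induction with
  | base => rfl
  | succ N hMN ih =>
    rw [ih, continuationAt, continuationAt, Finset.sum_range_succ,
      innerSeries_eq_add_succ hω hδ hf (innerDomain_mono hδ hMN hτ)]
    ring

/-- A number of Taylor terms which suffices for `τ ∈ innerDomain δ N` when `Re τ < 1/2`. -/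
noncomputable def innerOrder (δ : ℝ) (τ : ℂ) : ℕ := ⌈-(2 * δ * τ.re) / (1 - δ)⌉₊

lemma mem_innerDomain_innerOrder (hδ : δ < 1) (hτ : τ.re < 1 / 2) :
    τ ∈ innerDomain δ (innerOrder δ τ) := by
  have hpos : 0 < 1 - δ := sub_pos.mpr hδ
  have hceil := (div_le_iff₀ hpos).mp (Nat.le_ceil (-(2 * δ * τ.re) / (1 - δ)))
  have : (0 : ℝ) ≤ innerOrder δ τ := Nat.cast_nonneg _
  have h₁ : 2 * τ.re < innerOrder δ τ + 1 := by linarith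
  have h₂ : 1 < (innerExponent δ (innerOrder δ τ) τ).re := by
    rw [innerExponent_re, innerOrder]
    nlinarith
  exact ⟨h₁, h₂⟩

/-- The meromorphic continuation of `outerSeries` to `ℂ`, see `continuationAt`. -/
noncomputable def continuation (ω δ : ℝ) (f : ℝ → ℂ) (G : ℂ → ℂ) (τ : ℂ) : ℂ :=
  if 0 < τ.re then outerSeries ω δ f τ else continuationAt ω δ f G (innerOrder δ τ) τ

lemma continuation_of_re_pos (hτ : 0 < τ.re) :
    continuation ω δ f G τ = outerSeries ω δ f τ :=
  if_pos hτ

lemma continuation_eq_continuationAt (hω : 0 < ω) (hδ₀ : 0 ≤ δ) (hδ₁ : δ < 1)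
    (hf : ∀ m : ℕ, ContDiff ℝ m f) (hf_top : f =O[atTop] fun u => u⁻¹)
    (hG : ∀ τ : ℂ, 0 < τ.re → τ.re < 1 / 2 → mellin f (1 - 2 * τ) = G τ)
    {N : ℕ} (hτ : τ ∈ innerDomain δ N) (hτ₁ : τ.re < 1 / 2) :
    continuation ω δ f G τ = continuationAt ω δ f G N τ := by
  unfold continuation
  split_ifs with hτ₀
  · rw [outerSeries_eq_continuationAt_zero hω hδ₀ hδ₁ hf hf_top hG hτ₀ hτ₁]
    exact continuationAt_eq_of_le hω hδ₁.le hf N.zero_le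
      (mem_innerDomain_zero hδ₀ hδ₁ hτ₀.le hτ₁)
  · rw [continuationAt_eq_of_le hω hδ₁.le hf (le_max_left _ N)
      (mem_innerDomain_innerOrder hδ₁ hτ₁),
      continuationAt_eq_of_le hω hδ₁.le hf (le_max_right (innerOrder δ τ) N) hτ]

lemma meromorphic_taylorTerm (ω δ : ℝ) (f : ℝ → ℂ) (n : ℕ) :
    Meromorphic (taylorTerm ω δ f n) := by
  intro τ
  have hzeta : MeromorphicAt (fun τ => riemannZeta (innerExponent δ n τ)) τ :=
    (meromorphic_riemannZeta _).comp_analyticAt (by unfold innerExponent; fun_prop)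
  unfold taylorTerm
  fun_prop

lemma meromorphicAt_continuationAt (hω : 0 < ω) (hδ : δ ≤ 1) (hf : ∀ m : ℕ, ContDiff ℝ m f)
    (hG : Meromorphic G) {N : ℕ} (hτ : τ ∈ innerDomain δ N) :
    MeromorphicAt (continuationAt ω δ f G N) τ := by
  have hzeta : MeromorphicAt (fun τ : ℂ => riemannZeta (2 * τ + 1)) τ :=
    (meromorphic_riemannZeta _).comp_analyticAt (by fun_prop)
  have hpow : MeromorphicAt (fun τ : ℂ => (ω : ℂ) ^ (-(2 * τ + 1))) τ :=
    ((differentiable_cpow_neg_two_mul_add_one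
      (Complex.ofReal_ne_zero.mpr hω.ne')).analyticAt τ).meromorphicAt
  have hinner : MeromorphicAt (innerSeries ω δ f N) τ :=
    (DifferentiableOn.analyticAt (fun s hs =>
      (differentiableAt_innerSeries hω hδ hf hs).differentiableWithinAt)
      ((isOpen_innerDomain δ N).mem_nhds hτ)).meromorphicAt
  exact (((hpow.mul hzeta).mul (hG τ)).sub
    (MeromorphicAt.fun_sum fun n _ => meromorphic_taylorTerm ω δ f n τ)).sub hinner

lemma differentiableAt_continuation (hω : 0 < ω) (hδ : 0 ≤ δ) (hf : Continuous f)
    (hf_top : f =O[atTop] fun u => u⁻¹) (hτ : 0 < τ.re) :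
    DifferentiableAt ℂ (continuation ω δ f G) τ := by
  have hopen : IsOpen {s : ℂ | 0 < s.re} := isOpen_lt continuous_const Complex.continuous_re
  refine (differentiableAt_outerSeries hω hδ hf hf_top hτ).congr_of_eventuallyEq ?_
  filter_upwards [hopen.mem_nhds hτ] with s hs using continuation_of_re_pos hs

lemma exists_norm_continuation_le (hω : 0 < ω) (hδ : 0 ≤ δ) (hf : Continuous f)
    (hf_top : f =O[atTop] fun u => u⁻¹) {ε : ℝ} (hε : 0 < ε) :
    ∃ B, ∀ τ : ℂ, ε ≤ τ.re → ‖continuation ω δ f G τ‖ ≤ B := by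
  obtain ⟨B, hB⟩ := exists_norm_outerSeries_le hω hδ hf hf_top hε
  refine ⟨B, fun τ hτ => ?_⟩
  rw [continuation_of_re_pos (hε.trans_le hτ)]
  exact hB τ hτ

lemma meromorphic_continuation (hω : 0 < ω) (hδ₀ : 0 ≤ δ) (hδ₁ : δ < 1)
    (hf : ∀ m : ℕ, ContDiff ℝ m f) (hf_top : f =O[atTop] fun u => u⁻¹) (hGm : Meromorphic G)
    (hG : ∀ τ : ℂ, 0 < τ.re → τ.re < 1 / 2 → mellin f (1 - 2 * τ) = G τ) :
    Meromorphic (continuation ω δ f G) := by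
  intro τ
  rcases lt_or_ge 0 τ.re with hτ₀ | hτ₀
  · have hopen : IsOpen {s : ℂ | 0 < s.re} := isOpen_lt continuous_const Complex.continuous_re
    exact (DifferentiableOn.analyticAt (fun s hs => (differentiableAt_continuation hω hδ₀
      (hf 0).continuous hf_top hs).differentiableWithinAt) (hopen.mem_nhds hτ₀)).meromorphicAt
  · have hτ₁ : τ.re < 1 / 2 := by linarith
    have hτ := mem_innerDomain_innerOrder hδ₁ hτ₁
    have hopen : IsOpen {s : ℂ | s.re < 1 / 2} := isOpen_lt Complex.continuous_re continuous_const
    refine (meromorphicAt_continuationAt hω hδ₁.le hf hGm hτ).congr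
      (EventuallyEq.filter_mono ?_ nhdsWithin_le_nhds)
    filter_upwards [(isOpen_innerDomain δ _).mem_nhds hτ, hopen.mem_nhds hτ₁] with s hs hs₁
    exact (continuation_eq_continuationAt hω hδ₀ hδ₁ hf hf_top hG hs hs₁).symm

end Continuation

/-! ### Series weighted by Pochhammer symbols -/

section Pochhammer

open scoped Nat

variable {D : ℂ → ℂ} {s : ℂ}

/-- The coefficient `(s)_j / (j! 4^j)`. -/
noncomputable def pochCoeff (j : ℕ) (s : ℂ) : ℂ := pochSym s j / (j ! * 4 ^ j)

lemma pochCoeff_zero (s : ℂ) : pochCoeff 0 s = 1 := by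
  simp [pochCoeff, pochSym]

lemma pochCoeff_succ_zero (j : ℕ) : pochCoeff (j + 1) 0 = 0 := by
  simp [pochCoeff, pochSym, Finset.prod_range_succ']

lemma pochCoeff_succ (j : ℕ) (s : ℂ) :
    pochCoeff (j + 1) s = (s + j) / (4 * (j + 1)) * pochCoeff j s := by
  have hj : (j + 1 : ℂ) ≠ 0 := Nat.cast_add_one_ne_zero j
  simp only [pochCoeff, pochSym, Finset.prod_range_succ, Nat.factorial_succ, pow_succ]
  push_cast
  field_simp

lemma differentiable_pochCoeff (j : ℕ) : Differentiable ℂ (pochCoeff j) := by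
  unfold pochCoeff pochSym
  fun_prop

lemma norm_pochCoeff_le {R : ℝ} (hs : ‖s‖ ≤ R) (j : ℕ) :
    ‖pochCoeff j s‖ ≤ ‖pochCoeff j (R : ℂ)‖ := by
  have hR : 0 ≤ R := (norm_nonneg s).trans hs
  simp only [pochCoeff, pochSym, norm_div, norm_prod]
  gcongr with i
  calc ‖s + i‖ ≤ R + i := (norm_add_le _ _).trans (by simpa using hs)
    _ = ‖(R : ℂ) + i‖ := by
      rw [← Complex.ofReal_natCast, ← Complex.ofReal_add, Complex.norm_of_nonneg (by positivity)]

lemma summable_norm_pochCoeff (s : ℂ) : Summable fun j => ‖pochCoeff j s‖ := by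
  refine summable_of_ratio_norm_eventually_le (r := 1 / 2) (by norm_num) ?_
  filter_upwards [eventually_ge_atTop ⌈‖s‖⌉₊] with j hj
  have hsj : ‖s + j‖ ≤ 2 * (j + 1) := by
    calc ‖s + j‖ ≤ ‖s‖ + j := by simpa using norm_add_le s j
      _ ≤ j + j := by gcongr; exact Nat.ceil_le.mp hj
      _ ≤ 2 * (j + 1) := by linarith
  have hratio : ‖(s + j) / (4 * (j + 1))‖ ≤ 1 / 2 := by
    rw [norm_div, norm_mul, Complex.norm_ofNat, ← Nat.cast_add_one, Complex.norm_natCast,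
      div_le_iff₀ (by positivity)]
    push_cast
    linarith
  rw [norm_norm, norm_norm, pochCoeff_succ, norm_mul]
  gcongr

/-- The tail `∑_{j ≥ J} (s)_j / (j! 4^j) D(s + j)`. -/
noncomputable def pochTail (D : ℂ → ℂ) (J : ℕ) (s : ℂ) : ℂ :=
  ∑' j : ℕ, pochCoeff (j + J) s * D (s + (j + J : ℕ))

lemma pochTail_one_zero (D : ℂ → ℂ) : pochTail D 1 0 = 0 := by
  simp [pochTail, pochCoeff_succ_zero]

lemma exists_isOpen_summable_bound_pochTail
    (hD : ∀ ε > 0, ∃ B, ∀ τ : ℂ, ε ≤ τ.re → ‖D τ‖ ≤ B) {J : ℕ} (hs : 0 < s.re + J) :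
    ∃ V, IsOpen V ∧ s ∈ V ∧ (∀ z ∈ V, 0 < z.re + J) ∧ ∃ b : ℕ → ℝ, Summable b ∧
      ∀ j, ∀ z ∈ V, ‖pochCoeff (j + J) z * D (z + (j + J : ℕ))‖ ≤ b j := by
  obtain ⟨ε, hε, hlt⟩ := exists_between hs
  obtain ⟨B, hB⟩ := hD ε hε
  refine ⟨Metric.ball 0 (‖s‖ + 1) ∩ {z | ε < z.re + J},
    Metric.isOpen_ball.inter (isOpen_lt continuous_const (by fun_prop)),
    ⟨by simp, hlt⟩, fun z hz => hε.trans hz.2, _,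
    ((summable_nat_add_iff J).mpr (summable_norm_pochCoeff (‖s‖ + 1 : ℝ))).mul_right B,
    fun j z hz => ?_⟩
  have hnorm : ‖z‖ ≤ ‖s‖ + 1 := (mem_ball_zero_iff.mp hz.1).le
  have hre : ε ≤ (z + (j + J : ℕ)).re := by
    have hz₂ : ε < z.re + J := hz.2
    have : (0 : ℝ) ≤ j := Nat.cast_nonneg j
    rw [Complex.add_re, Complex.natCast_re, Nat.cast_add]
    linarith
  rw [norm_mul]
  gcongr
  · exact norm_pochCoeff_le hnorm _
  · exact hB _ hre

lemma pochTail_zero_eq_sum_add_pochTail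
    (hD : ∀ ε > 0, ∃ B, ∀ τ : ℂ, ε ≤ τ.re → ‖D τ‖ ≤ B) {J : ℕ} (hs : 0 < s.re + J) :
    pochTail D 0 s = ∑ j ∈ Finset.range J, pochCoeff j s * D (s + j) + pochTail D J s := by
  obtain ⟨V, -, hsV, -, b, hb, hle⟩ := exists_isOpen_summable_bound_pochTail hD hs
  exact (Summable.sum_add_tsum_nat_add' (f := fun j : ℕ => pochCoeff j s * D (s + j))
    (.of_norm_bounded hb fun j => hle j s hsV)).symm

lemma analyticAt_pochTail (hD : ∀ ε > 0, ∃ B, ∀ τ : ℂ, ε ≤ τ.re → ‖D τ‖ ≤ B)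
    (hD_diff : ∀ τ : ℂ, 0 < τ.re → DifferentiableAt ℂ D τ) {J : ℕ} (hs : 0 < s.re + J) :
    AnalyticAt ℂ (pochTail D J) s := by
  obtain ⟨V, hV, hsV, hVsub, b, hb, hle⟩ := exists_isOpen_summable_bound_pochTail hD hs
  refine (Complex.differentiableOn_tsum_of_summable_norm hb (fun j z hz => ?_) hV hle).analyticAt
    (hV.mem_nhds hsV)
  have hre : 0 < (z + (j + J : ℕ)).re := by
    have : (0 : ℝ) ≤ j := Nat.cast_nonneg j
    rw [Complex.add_re, Complex.natCast_re, Nat.cast_add]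
    linarith [hVsub z hz]
  exact ((differentiable_pochCoeff _ z).mul ((hD_diff _ hre).fun_comp' z
    (f := fun z : ℂ => z + (j + J : ℕ)) (by fun_prop))).differentiableWithinAt

lemma meromorphic_pochTail_zero (hD : ∀ ε > 0, ∃ B, ∀ τ : ℂ, ε ≤ τ.re → ‖D τ‖ ≤ B)
    (hD_diff : ∀ τ : ℂ, 0 < τ.re → DifferentiableAt ℂ D τ) (hD_mero : Meromorphic D) :
    Meromorphic (pochTail D 0) := by
  intro s
  obtain ⟨J, hJ⟩ := exists_nat_gt (-s.re)
  have hs : 0 < s.re + J := by linarith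
  have hterm (j : ℕ) : MeromorphicAt (fun s => pochCoeff j s * D (s + j)) s :=
    ((differentiable_pochCoeff j).analyticAt s).meromorphicAt.mul
      ((hD_mero _).comp_analyticAt (by fun_prop))
  refine ((MeromorphicAt.fun_sum fun j (_ : j ∈ Finset.range J) => hterm j).add
    (analyticAt_pochTail hD hD_diff hs).meromorphicAt).congr
    (EventuallyEq.filter_mono ?_ nhdsWithin_le_nhds)
  have hopen : IsOpen {z : ℂ | 0 < z.re + J} := isOpen_lt continuous_const (by fun_prop)
  filter_upwards [hopen.mem_nhds hs] with z hz
  exact (pochTail_zero_eq_sum_add_pochTail hD hz).symm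

end Pochhammer

/-! ### The double series -/

/-- The prefactor `2 sin(πs)/π`, whose zero at `0` cancels the pole of `ζ(2s+1)`. -/
noncomputable def sinFactor (s : ℂ) : ℂ := 2 * Complex.sin (Real.pi * s) / Real.pi

lemma differentiable_sinFactor : Differentiable ℂ sinFactor := by
  unfold sinFactor
  fun_prop

lemma sinFactor_zero : sinFactor 0 = 0 := by
  simp [sinFactor]

lemma hasDerivAt_sinFactor_zero : HasDerivAt sinFactor 2 0 := by
  have hπ : (Real.pi : ℂ) ≠ 0 := Complex.ofReal_ne_zero.mpr Real.pi_ne_zero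
  have hsin := (((hasDerivAt_id (0 : ℂ)).const_mul (Real.pi : ℂ)).csin.const_mul 2).div_const
    (Real.pi : ℂ)
  exact hsin.congr_deriv (by simp [hπ])

/-- The entire function `2 sin(πs)/(πs)`. -/
noncomputable def sincFactor : ℂ → ℂ := dslope sinFactor 0

lemma sincFactor_zero : sincFactor 0 = 2 := by
  rw [sincFactor, dslope_same, hasDerivAt_sinFactor_zero.deriv]

lemma mul_sincFactor (s : ℂ) : s * sincFactor s = sinFactor s := by
  simpa [sinFactor_zero, sincFactor] using sub_smul_dslope sinFactor 0 s

lemma differentiable_sincFactor : Differentiable ℂ sincFactor :=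
  differentiableOn_univ.mp <| (Complex.differentiableOn_dslope univ_mem).mpr
    differentiable_sinFactor.differentiableOn

lemma sincFactor_neg (s : ℂ) : sincFactor (-s) = sincFactor s := by
  rcases eq_or_ne s 0 with rfl | hs
  · rw [neg_zero]
  · have hodd : sinFactor (-s) = -sinFactor s := by
      simp [sinFactor, neg_div]
    refine mul_left_cancel₀ hs ?_
    linear_combination -mul_sincFactor s - mul_sincFactor (-s) - hodd

lemma hasDerivAt_sincFactor_zero : HasDerivAt sincFactor 0 0 := by
  have hderiv : deriv sincFactor 0 = 0 := by
    have h := deriv_comp_neg sincFactor (0 : ℂ)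
    rw [funext sincFactor_neg, neg_zero] at h
    exact self_eq_neg.mp h
  simpa only [hderiv] using (differentiable_sincFactor 0).hasDerivAt

section DoubleSeries

variable {ω δ : ℝ} {f : ℝ → ℂ} {G : ℂ → ℂ} {s : ℂ}

/-- The `(k, j)`-term of the double series attached to a kernel `f`; for `f = A₂` it is
`Omega2Term`. -/
noncomputable def doubleTerm (ω δ : ℝ) (f : ℝ → ℂ) (k j : ℕ) (s : ℂ) : ℂ :=
  sinFactor s * pochCoeff j s * outerTerm ω δ f k (s + j)

lemma exists_isOpen_summable_bound_doubleTerm (hω : 0 < ω) (hδ : 0 ≤ δ) (hf : Continuous f)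
    (hf_top : f =O[atTop] fun u => u⁻¹) (hs : 0 < s.re) :
    ∃ V, IsOpen V ∧ s ∈ V ∧ ∃ b : ℕ × ℕ → ℝ, Summable b ∧
      ∀ p, ∀ z ∈ V, ‖doubleTerm ω δ f (p.1 + 1) p.2 z‖ ≤ b p := by
  have hs₂ : 0 < s.re / 2 := by positivity
  obtain ⟨b, hb, hle⟩ := exists_summable_bound_outerTerm hω hδ hf hf_top hs₂
  obtain ⟨S, hS⟩ := (isCompact_closedBall (0 : ℂ) (‖s‖ + 1)).exists_bound_of_continuousOn
    differentiable_sinFactor.continuous.continuousOn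
  have hpoch := summable_norm_pochCoeff (‖s‖ + 1 : ℝ)
  have hb_nonneg (k : ℕ) : 0 ≤ b k := (norm_nonneg _).trans (hle k s (half_lt_self hs).le)
  refine ⟨Metric.ball 0 (‖s‖ + 1) ∩ {z | s.re / 2 < z.re},
    Metric.isOpen_ball.inter (isOpen_lt continuous_const Complex.continuous_re),
    ⟨by simp, half_lt_self hs⟩,
    fun p => S * (b p.1 * ‖pochCoeff p.2 (‖s‖ + 1 : ℝ)‖),
    (hb.mul_of_nonneg hpoch hb_nonneg fun _ => norm_nonneg _).mul_left S, fun p z hz => ?_⟩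
  have hz₁ : ‖z‖ ≤ ‖s‖ + 1 := (mem_ball_zero_iff.mp hz.1).le
  have hz₂ : s.re / 2 < z.re := hz.2
  have hre : s.re / 2 ≤ (z + p.2).re := by
    rw [Complex.add_re, Complex.natCast_re]
    linarith [p.2.cast_nonneg (α := ℝ)]
  have hSz : ‖sinFactor z‖ ≤ S := hS z (mem_closedBall_zero_iff.mpr hz₁)
  calc ‖doubleTerm ω δ f (p.1 + 1) p.2 z‖
    _ = ‖sinFactor z‖ * ‖pochCoeff p.2 z‖ * ‖outerTerm ω δ f (p.1 + 1) (z + p.2)‖ := by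
        rw [doubleTerm, norm_mul, norm_mul]
    _ ≤ S * ‖pochCoeff p.2 (‖s‖ + 1 : ℝ)‖ * b p.1 := by
        have hS_nonneg : 0 ≤ S := (norm_nonneg _).trans hSz
        gcongr
        · exact norm_pochCoeff_le hz₁ _
        · exact hle _ _ hre
    _ = _ := by ring

lemma summable_norm_doubleTerm (hω : 0 < ω) (hδ : 0 ≤ δ) (hf : Continuous f)
    (hf_top : f =O[atTop] fun u => u⁻¹) (hs : 0 < s.re) :
    Summable fun p : ℕ × ℕ => ‖doubleTerm ω δ f (p.1 + 1) p.2 s‖ := by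
  obtain ⟨V, -, hsV, b, hb, hle⟩ :=
    exists_isOpen_summable_bound_doubleTerm hω hδ hf hf_top hs
  exact hb.of_nonneg_of_le (fun _ => norm_nonneg _) fun p => hle p s hsV

lemma tendstoLocallyUniformlyOn_sum_doubleTerm (hω : 0 < ω) (hδ : 0 ≤ δ) (hf : Continuous f)
    (hf_top : f =O[atTop] fun u => u⁻¹) :
    TendstoLocallyUniformlyOn
      (fun (N : Finset (ℕ × ℕ)) s => ∑ p ∈ N, doubleTerm ω δ f (p.1 + 1) p.2 s)
      (fun s => ∑' p : ℕ × ℕ, doubleTerm ω δ f (p.1 + 1) p.2 s) atTop {s | 0 < s.re} := by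
  refine tendstoLocallyUniformlyOn_of_forall_exists_nhds fun s hs => ?_
  obtain ⟨V, hV, hsV, b, hb, hle⟩ :=
    exists_isOpen_summable_bound_doubleTerm hω hδ hf hf_top hs
  exact ⟨V, mem_nhdsWithin_of_mem_nhds (hV.mem_nhds hsV), tendstoUniformlyOn_tsum hb hle⟩

/-- The meromorphic continuation of the double series. The value at `0`, where `continuation` has a
pole, is the limit. -/
noncomputable def doubleContinuation (ω δ : ℝ) (f : ℝ → ℂ) (G : ℂ → ℂ) : ℂ → ℂ :=
  Function.update (fun s => sinFactor s * pochTail (continuation ω δ f G) 0 s) 0 (G 0 / ω)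

lemma doubleContinuation_of_ne (hs : s ≠ 0) : doubleContinuation ω δ f G s =
    sinFactor s * pochTail (continuation ω δ f G) 0 s :=
  Function.update_of_ne hs _ _

lemma doubleContinuation_zero : doubleContinuation ω δ f G 0 = G 0 / ω :=
  Function.update_self _ _ _

lemma doubleContinuation_eq_tsum (hω : 0 < ω) (hδ : 0 ≤ δ) (hf : Continuous f)
    (hf_top : f =O[atTop] fun u => u⁻¹) (hs : 0 < s.re) :
    doubleContinuation ω δ f G s = ∑' p : ℕ × ℕ, doubleTerm ω δ f (p.1 + 1) p.2 s := by
  have hs₀ : s ≠ 0 := fun h => hs.ne' (by rw [h, Complex.zero_re])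
  have hsum := (summable_norm_doubleTerm hω hδ hf hf_top hs).of_norm
  have hswap : Summable fun p : ℕ × ℕ => doubleTerm ω δ f (p.2 + 1) p.1 s :=
    (Equiv.prodComm ℕ ℕ).summable_iff.mpr hsum
  calc doubleContinuation ω δ f G s
    _ = ∑' j : ℕ, sinFactor s * (pochCoeff j s * continuation ω δ f G (s + j)) := by
        rw [doubleContinuation_of_ne hs₀, pochTail, tsum_mul_left]
        rfl
    _ = ∑' (j : ℕ) (k : ℕ), doubleTerm ω δ f (k + 1) j s := by
        refine tsum_congr fun j => ?_
        have hre : 0 < (s + j).re := by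
          rw [Complex.add_re, Complex.natCast_re]
          positivity
        simp only [doubleTerm]
        rw [continuation_of_re_pos hre, tsum_mul_left, outerSeries, mul_assoc]
    _ = ∑' p : ℕ × ℕ, doubleTerm ω δ f (p.2 + 1) p.1 s := hswap.tsum_prod.symm
    _ = _ := (Equiv.prodComm ℕ ℕ).tsum_eq fun p => doubleTerm ω δ f (p.1 + 1) p.2 s

lemma meromorphic_doubleContinuation (hω : 0 < ω) (hδ₀ : 0 ≤ δ) (hδ₁ : δ < 1)
    (hf : ∀ m : ℕ, ContDiff ℝ m f) (hf_top : f =O[atTop] fun u => u⁻¹) (hGm : Meromorphic G)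
    (hG : ∀ τ : ℂ, 0 < τ.re → τ.re < 1 / 2 → mellin f (1 - 2 * τ) = G τ) :
    Meromorphic (doubleContinuation ω δ f G) := by
  intro s
  have hpoch := meromorphic_pochTail_zero
    (fun _ => exists_norm_continuation_le (G := G) hω hδ₀ (hf 0).continuous hf_top)
    (fun _ => differentiableAt_continuation hω hδ₀ (hf 0).continuous hf_top)
    (meromorphic_continuation hω hδ₀ hδ₁ hf hf_top hGm hG)
  exact MeromorphicAt.update ((differentiable_sinFactor.analyticAt s).meromorphicAt.mul (hpoch s))
    0 _

/-- The regular form of `doubleContinuation` near `0`: the factor `s` of `sinFactor s` has been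
moved to `ζ(2s+1)`. -/
noncomputable def localForm (ω δ : ℝ) (f : ℝ → ℂ) (G : ℂ → ℂ) (s : ℂ) : ℂ :=
  sincFactor s * (subOneMulZeta (2 * s + 1) / 2) * (ω : ℂ) ^ (-(2 * s + 1)) * G s +
    sinFactor s * (pochTail (continuation ω δ f G) 1 s - innerSeries ω δ f 0 s)

lemma localForm_zero : localForm ω δ f G 0 = G 0 / ω := by
  simp [localForm, sincFactor_zero, sinFactor_zero, subOneMulZeta_one, Complex.cpow_neg_one,
    div_eq_inv_mul]

lemma doubleContinuation_eventuallyEq_localForm (hω : 0 < ω) (hδ₀ : 0 ≤ δ) (hδ₁ : δ < 1)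
    (hf : ∀ m : ℕ, ContDiff ℝ m f) (hf_top : f =O[atTop] fun u => u⁻¹)
    (hG : ∀ τ : ℂ, 0 < τ.re → τ.re < 1 / 2 → mellin f (1 - 2 * τ) = G τ) :
    doubleContinuation ω δ f G =ᶠ[𝓝 0] localForm ω δ f G := by
  have hmem : (0 : ℂ) ∈ innerDomain δ 0 :=
    mem_innerDomain_zero hδ₀ hδ₁ Complex.zero_re.ge (by norm_num)
  have hre : ∀ᶠ s : ℂ in 𝓝 0, s.re ∈ Ioo (-1 : ℝ) (1 / 2) :=
    Complex.continuous_re.continuousAt.eventually_mem (Ioo_mem_nhds (by norm_num) (by norm_num))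
  filter_upwards [(isOpen_innerDomain δ 0).mem_nhds hmem, hre] with s hs ⟨hs₀, hs₁⟩
  rcases eq_or_ne s 0 with rfl | hne
  · rw [doubleContinuation_zero, localForm_zero]
  · have hζ : subOneMulZeta (2 * s + 1) = 2 * s * riemannZeta (2 * s + 1) := by
      rw [subOneMulZeta_of_ne (by simpa using hne), add_sub_cancel_right]
    rw [doubleContinuation_of_ne hne, localForm, hζ, pochTail_zero_eq_sum_add_pochTail (J := 1)
      (fun _ => exists_norm_continuation_le hω hδ₀ (hf 0).continuous hf_top)
      (by rw [Nat.cast_one]; linarith), Finset.sum_range_one, pochCoeff_zero, Nat.cast_zero,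
      add_zero, continuation_eq_continuationAt hω hδ₀ hδ₁ hf hf_top hG hs hs₁, continuationAt,
      Finset.sum_range_zero]
    linear_combination (-(ω : ℂ) ^ (-(2 * s + 1)) * riemannZeta (2 * s + 1) * G s) *
      mul_sincFactor s

lemma analyticAt_pochTail_one_sub_innerSeries_zero (hω : 0 < ω) (hδ₀ : 0 ≤ δ) (hδ₁ : δ < 1)
    (hf : ∀ m : ℕ, ContDiff ℝ m f) (hf_top : f =O[atTop] fun u => u⁻¹) :
    AnalyticAt ℂ (fun s => pochTail (continuation ω δ f G) 1 s - innerSeries ω δ f 0 s) 0 := by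
  have htail : AnalyticAt ℂ (pochTail (continuation ω δ f G) 1) 0 :=
    analyticAt_pochTail
      (fun _ => exists_norm_continuation_le hω hδ₀ (hf 0).continuous hf_top)
      (fun _ => differentiableAt_continuation hω hδ₀ (hf 0).continuous hf_top) (by simp)
  have hinner : AnalyticAt ℂ (innerSeries ω δ f 0) 0 :=
    DifferentiableOn.analyticAt (fun s hs =>
      (differentiableAt_innerSeries hω hδ₁.le hf hs).differentiableWithinAt)
      ((isOpen_innerDomain δ 0).mem_nhds
        (mem_innerDomain_zero hδ₀ hδ₁ Complex.zero_re.ge (by norm_num)))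
  exact htail.sub hinner

lemma analyticAt_doubleContinuation_zero (hω : 0 < ω) (hδ₀ : 0 ≤ δ) (hδ₁ : δ < 1)
    (hf : ∀ m : ℕ, ContDiff ℝ m f) (hf_top : f =O[atTop] fun u => u⁻¹)
    (hG : ∀ τ : ℂ, 0 < τ.re → τ.re < 1 / 2 → mellin f (1 - 2 * τ) = G τ)
    (hG₀ : AnalyticAt ℂ G 0) : AnalyticAt ℂ (doubleContinuation ω δ f G) 0 := by
  refine AnalyticAt.congr ?_
    (doubleContinuation_eventuallyEq_localForm hω hδ₀ hδ₁ hf hf_top hG).symm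
  have hζ : AnalyticAt ℂ (fun s : ℂ => subOneMulZeta (2 * s + 1)) 0 :=
    (differentiable_subOneMulZeta.comp
      (by fun_prop : Differentiable ℂ fun s : ℂ => 2 * s + 1)).analyticAt 0
  have hpow := (differentiable_cpow_neg_two_mul_add_one
    (Complex.ofReal_ne_zero.mpr hω.ne')).analyticAt 0
  exact ((((differentiable_sincFactor.analyticAt 0).mul hζ.div_const).mul hpow).mul hG₀).add
    ((differentiable_sinFactor.analyticAt 0).mul
      (analyticAt_pochTail_one_sub_innerSeries_zero hω hδ₀ hδ₁ hf hf_top))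

lemma deriv_doubleContinuation_zero (hω : 0 < ω) (hδ₀ : 0 ≤ δ) (hδ₁ : δ < 1)
    (hf : ∀ m : ℕ, ContDiff ℝ m f) (hf_top : f =O[atTop] fun u => u⁻¹)
    (hG : ∀ τ : ℂ, 0 < τ.re → τ.re < 1 / 2 → mellin f (1 - 2 * τ) = G τ) {G' : ℂ}
    (hG' : HasDerivAt G G' 0) :
    deriv (doubleContinuation ω δ f G) 0 =
      (G' + 2 * (Real.eulerMascheroniConstant - Real.log ω) * G 0) / ω -
        2 * innerSeries ω δ f 0 0 := by
  have hlin : HasDerivAt (fun s : ℂ => 2 * s + 1) 2 0 := by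
    simpa using ((hasDerivAt_id (0 : ℂ)).const_mul 2).add_const 1
  have hζ : HasDerivAt (fun s : ℂ => subOneMulZeta (2 * s + 1))
      (Real.eulerMascheroniConstant * 2) 0 :=
    HasDerivAt.comp (h₂ := subOneMulZeta) 0 (by simpa using hasDerivAt_subOneMulZeta_one) hlin
  have hpow := hlin.neg.const_cpow (Or.inl (Complex.ofReal_ne_zero.mpr hω.ne'))
  have hrem := (analyticAt_pochTail_one_sub_innerSeries_zero (G := G) hω hδ₀ hδ₁ hf
    hf_top).differentiableAt.hasDerivAt
  have hlocal := (((hasDerivAt_sincFactor_zero.mul (hζ.div_const 2)).mul hpow).mul hG').add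
    (hasDerivAt_sinFactor_zero.mul hrem)
  rw [(doubleContinuation_eventuallyEq_localForm hω hδ₀ hδ₁ hf hf_top hG).deriv_eq]
  refine hlocal.deriv.trans ?_
  simp only [Pi.mul_apply, sincFactor_zero, sinFactor_zero, pochTail_one_zero, mul_zero, zero_add,
    subOneMulZeta_one, Pi.neg_apply, Complex.cpow_neg_one, ← Complex.ofReal_log hω.le]
  ring

end DoubleSeries

/-! ### The cone kernel -/

lemma mellin_one_add_sq_rpow_neg (b : ℝ) (s : ℂ) :
    mellin (fun u : ℝ => (((1 + u ^ 2) ^ (-b) : ℝ) : ℂ)) s =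
      1 / 2 * Complex.betaIntegral (s / 2) (b - s / 2) := by
  have h := mellin_comp_rpow (fun y : ℝ => (((1 + y) ^ (-b) : ℝ) : ℂ)) s 2
  simpa only [Real.rpow_ofNat, mellin_one_add_rpow_neg, abs_two, Complex.real_smul,
    Complex.ofReal_inv, Complex.ofReal_ofNat, one_div] using h

/-- The function `A₂`, regarded as complex-valued. -/
noncomputable def coneKernel (η u : ℝ) : ℂ := coneA2 η u

/-- The Mellin transform of `coneKernel η` at `1 - 2τ`, continued meromorphically in `τ`. -/
noncomputable def coneMellin (η : ℝ) (τ : ℂ) : ℂ :=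
  -(Real.cosh η : ℂ) / 16 * (Real.sinh η : ℂ) ^ (2 * τ) *
    (Complex.Gamma (2 - τ) * Complex.Gamma (1 / 2 + τ) / Complex.Gamma (5 / 2))

lemma Omega2Term_eq_doubleTerm (ω : ℕ) (η δ : ℝ) (k j : ℕ) (s : ℂ) :
    Omega2Term ω η δ k j s = doubleTerm ω δ (coneKernel η) k j s := by
  simp only [Omega2Term, doubleTerm, sinFactor, pochCoeff, outerTerm, cutoff, coneKernel, mul_add,
    neg_add, mul_assoc, ← sub_eq_add_neg]

section Kernel

variable {η : ℝ}

lemma contDiff_coneKernel (η : ℝ) (m : ℕ) : ContDiff ℝ m (coneKernel η) := by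
  have hpow : ContDiff ℝ m fun u : ℝ => (1 + u ^ 2 * Real.sinh η ^ 2) ^ (-(5 : ℝ) / 2) :=
    ContDiff.rpow_const_of_ne (by fun_prop) fun u => by positivity
  exact Complex.ofRealCLM.contDiff.comp (contDiff_const.mul ((contDiff_id.pow 3).mul hpow))

lemma norm_coneKernel {u : ℝ} (hu : 0 ≤ u) :
    ‖coneKernel η u‖ = Real.cosh η * Real.sinh η ^ 4 / 8 *
      (u ^ 3 * (1 + u ^ 2 * Real.sinh η ^ 2) ^ (-(5 : ℝ) / 2)) := by
  have := Real.cosh_pos η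
  rw [coneKernel, Complex.norm_real, coneA2, neg_mul, norm_neg, Real.norm_of_nonneg]
  positivity

lemma norm_coneKernel_le_mul_pow {u : ℝ} (hu : 0 ≤ u) :
    ‖coneKernel η u‖ ≤ Real.cosh η * Real.sinh η ^ 4 / 8 * u ^ 3 := by
  have := Real.cosh_pos η
  have hle_one : (1 + u ^ 2 * Real.sinh η ^ 2) ^ (-(5 : ℝ) / 2) ≤ 1 :=
    Real.rpow_le_one_of_one_le_of_nonpos (le_add_of_nonneg_right (by positivity)) (by norm_num)
  rw [norm_coneKernel hu]
  exact mul_le_mul_of_nonneg_left (mul_le_of_le_one_right (by positivity) hle_one) (by positivity)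

lemma norm_coneKernel_le_mul_inv (hη : η ≠ 0) {u : ℝ} (hu : 0 < u) :
    ‖coneKernel η u‖ ≤ Real.cosh η / 8 * u⁻¹ := by
  have := Real.cosh_pos η
  have hsinh : Real.sinh η ≠ 0 := Real.sinh_ne_zero.mpr hη
  have hpow : (1 + u ^ 2 * Real.sinh η ^ 2) ^ (-(5 : ℝ) / 2) ≤
      ((u ^ 2 * Real.sinh η ^ 2) ^ 2)⁻¹ := by
    calc (1 + u ^ 2 * Real.sinh η ^ 2) ^ (-(5 : ℝ) / 2)
      _ ≤ (1 + u ^ 2 * Real.sinh η ^ 2) ^ (-(2 : ℕ) : ℝ) :=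
          Real.rpow_le_rpow_of_exponent_le (le_add_of_nonneg_right (by positivity)) (by norm_num)
      _ = ((1 + u ^ 2 * Real.sinh η ^ 2) ^ 2)⁻¹ := by
          rw [Real.rpow_neg (by positivity), Real.rpow_natCast]
      _ ≤ ((u ^ 2 * Real.sinh η ^ 2) ^ 2)⁻¹ := by
          gcongr
          exact le_add_of_nonneg_left zero_le_one
  calc ‖coneKernel η u‖
    _ ≤ Real.cosh η * Real.sinh η ^ 4 / 8 * (u ^ 3 * ((u ^ 2 * Real.sinh η ^ 2) ^ 2)⁻¹) := by
        rw [norm_coneKernel hu.le]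
        gcongr
    _ = Real.cosh η / 8 * u⁻¹ := by
        field_simp

lemma coneKernel_isBigO_inv (hη : η ≠ 0) : coneKernel η =O[atTop] fun u => u⁻¹ := by
  refine IsBigO.of_bound (Real.cosh η / 8) ?_
  filter_upwards [eventually_gt_atTop 0] with u hu
  rw [Real.norm_of_nonneg (by positivity)]
  exact norm_coneKernel_le_mul_inv hη hu

lemma coneKernel_eq_smul (η u : ℝ) :
    coneKernel η u = (-(Real.cosh η * Real.sinh η ^ 4 / 8 : ℝ) : ℂ) • ((u : ℂ) ^ (3 : ℂ) •
      (((1 + (Real.sinh η * u) ^ 2) ^ (-(5 / 2) : ℝ) : ℝ) : ℂ)) := by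
  have hcpow : (u : ℂ) ^ (3 : ℂ) = (u : ℂ) ^ 3 := mod_cast Complex.cpow_natCast u 3
  rw [coneKernel, coneA2, hcpow, mul_pow, mul_comm (Real.sinh η ^ 2), neg_div]
  push_cast [smul_eq_mul]
  ring

lemma mellin_coneKernel (hη : 0 < η) {τ : ℂ} (hτ₁ : -(1 / 2) < τ.re) (hτ₂ : τ.re < 2) :
    mellin (coneKernel η) (1 - 2 * τ) = coneMellin η τ := by
  have hsinh : 0 < Real.sinh η := Real.sinh_pos_iff.mpr hη
  have hsinh' : (Real.sinh η : ℂ) ≠ 0 := Complex.ofReal_ne_zero.mpr hsinh.ne'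
  have hscaled := mellin_comp_mul_left
    (fun u : ℝ => (((1 + u ^ 2) ^ (-(5 / 2) : ℝ) : ℝ) : ℂ)) (1 - 2 * τ + 3) hsinh
  have hbeta : Complex.betaIntegral ((1 - 2 * τ + 3) / 2) ((5 / 2 : ℝ) - (1 - 2 * τ + 3) / 2) =
      Complex.Gamma (2 - τ) * Complex.Gamma (1 / 2 + τ) / Complex.Gamma (5 / 2) := by
    rw [show (1 - 2 * τ + 3) / 2 = 2 - τ by ring,
      show ((5 / 2 : ℝ) : ℂ) - (2 - τ) = 1 / 2 + τ by push_cast; ring,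
      Complex.betaIntegral_eq_Gamma_mul_div _ _ (by simpa using hτ₂)
        (by norm_num; linarith), show 2 - τ + (1 / 2 + τ) = 5 / 2 by ring]
  have hcpow : (Real.sinh η : ℂ) ^ (-(1 - 2 * τ + 3)) =
      (Real.sinh η : ℂ) ^ (2 * τ) / (Real.sinh η : ℂ) ^ 4 := by
    rw [show -(1 - 2 * τ + 3) = 2 * τ - (4 : ℕ) by push_cast; ring, Complex.cpow_sub _ _ hsinh',
      Complex.cpow_natCast]
  rw [funext (coneKernel_eq_smul η), mellin_const_smul, mellin_cpow_smul, hscaled,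
    mellin_one_add_sq_rpow_neg, hbeta, hcpow, coneMellin]
  simp only [smul_eq_mul, Complex.ofReal_div, Complex.ofReal_mul, Complex.ofReal_pow,
    Complex.ofReal_ofNat]
  field_simp
  ring

lemma meromorphic_coneMellin (hη : η ≠ 0) : Meromorphic (coneMellin η) := by
  have hsinh : (Real.sinh η : ℂ) ≠ 0 := Complex.ofReal_ne_zero.mpr (Real.sinh_ne_zero.mpr hη)
  intro τ
  have hcpow : AnalyticAt ℂ (fun τ : ℂ => (Real.sinh η : ℂ) ^ (2 * τ)) τ :=
    Differentiable.analyticAt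
      (fun _ => (differentiableAt_id.const_mul 2).const_cpow (Or.inl hsinh)) τ
  have hGamma₁ : MeromorphicAt (fun τ : ℂ => Complex.Gamma (2 - τ)) τ :=
    (Meromorphic.Gamma (2 - τ)).comp_analyticAt (by fun_prop)
  have hGamma₂ : MeromorphicAt (fun τ : ℂ => Complex.Gamma (1 / 2 + τ)) τ :=
    (Meromorphic.Gamma (1 / 2 + τ)).comp_analyticAt (by fun_prop)
  exact ((MeromorphicAt.const _ τ).mul hcpow.meromorphicAt).mul
    ((hGamma₁.mul hGamma₂).div (MeromorphicAt.const _ τ))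

lemma hasDerivAt_Gamma_two_sub_zero : HasDerivAt (fun τ : ℂ => Complex.Gamma (2 - τ))
    (Real.eulerMascheroniConstant - 1) 0 := by
  have h : HasDerivAt Complex.Gamma (1 - Real.eulerMascheroniConstant) (2 - 0) := by
    convert Complex.hasDerivAt_Gamma_nat 1 using 1
    · simp [harmonic, sub_eq_neg_add]
    · norm_num
  exact (h.comp_const_sub 2 0).congr_deriv (neg_sub _ _)

lemma hasDerivAt_Gamma_one_half_add_zero : HasDerivAt (fun τ : ℂ => Complex.Gamma (1 / 2 + τ))
    (-Complex.Gamma (1 / 2) * (Real.eulerMascheroniConstant + 2 * Real.log 2)) 0 := by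
  have h : HasDerivAt Complex.Gamma
      (-Complex.Gamma (1 / 2) * (Real.eulerMascheroniConstant + 2 * Real.log 2)) (1 / 2 + 0) := by
    convert Complex.hasDerivAt_Gamma_one_half using 1
    · rw [Complex.Gamma_one_half_eq]
      rw [Real.sqrt_eq_rpow, Complex.ofReal_cpow Real.pi_pos.le, Complex.ofReal_log zero_le_two]
      norm_num
    · rw [add_zero]
  exact h.comp_const_add (1 / 2) 0

lemma complex_Gamma_five_half : Complex.Gamma (5 / 2) = 3 / 4 * Complex.Gamma (1 / 2) := by
  rw [show (5 / 2 : ℂ) = 1 / 2 + 1 + 1 by norm_num, Complex.Gamma_add_one _ (by norm_num),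
    Complex.Gamma_add_one _ (by norm_num)]
  ring

lemma complex_Gamma_one_half_ne_zero : Complex.Gamma (1 / 2) ≠ 0 :=
  Complex.Gamma_ne_zero_of_re_pos (by norm_num)

lemma coneMellin_zero (η : ℝ) : coneMellin η 0 = -Real.cosh η / 12 := by
  have hGamma := complex_Gamma_one_half_ne_zero
  simp only [coneMellin, sub_zero, add_zero, mul_zero, Complex.cpow_zero, complex_Gamma_five_half,
    Complex.Gamma_ofNat_eq_factorial, Nat.factorial_one, Nat.cast_one]
  field_simp
  ring

lemma hasDerivAt_coneMellin_zero (hη : 0 < η) :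
    HasDerivAt (coneMellin η)
      (-Real.cosh η / 12 * (2 * Real.log (Real.sinh η) - 1 - 2 * Real.log 2)) 0 := by
  have hsinh : 0 < Real.sinh η := Real.sinh_pos_iff.mpr hη
  have hGamma := complex_Gamma_one_half_ne_zero
  have hcpow : HasDerivAt (fun τ : ℂ => (Real.sinh η : ℂ) ^ (2 * τ))
      (2 * Real.log (Real.sinh η)) 0 := by
    have h := ((hasDerivAt_id (0 : ℂ)).const_mul 2).const_cpow
      (c := (Real.sinh η : ℂ)) (Or.inl (Complex.ofReal_ne_zero.mpr hsinh.ne'))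
    refine h.congr_deriv ?_
    simp [Complex.ofReal_log hsinh.le, mul_comm]
  refine ((hcpow.const_mul (-(Real.cosh η : ℂ) / 16)).mul
    ((hasDerivAt_Gamma_two_sub_zero.mul hasDerivAt_Gamma_one_half_add_zero).div_const
      (Complex.Gamma (5 / 2)))).congr_deriv ?_
  simp only [Pi.mul_apply, sub_zero, add_zero, mul_zero, Complex.cpow_zero, complex_Gamma_five_half,
    Complex.Gamma_ofNat_eq_factorial, Nat.factorial_one, Nat.cast_one]
  field_simp
  ring

lemma analyticAt_coneMellin_zero (hη : 0 < η) : AnalyticAt ℂ (coneMellin η) 0 :=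
  (meromorphic_coneMellin hη.ne' 0).analyticAt (hasDerivAt_coneMellin_zero hη).continuousAt

end Kernel

/-! ### The limit `η → 0⁺` -/

lemma tendsto_cosh_zero : Tendsto (fun η : ℝ => (Real.cosh η : ℂ)) (𝓝[>] 0) (𝓝 1) := by
  have h : Continuous fun η : ℝ => (Real.cosh η : ℂ) := by fun_prop
  simpa using (h.tendsto 0).mono_left nhdsWithin_le_nhds

lemma tendsto_cosh_sub_one_mul_log_sinh_zero :
    Tendsto (fun η : ℝ => (Real.cosh η - 1) * Real.log (Real.sinh η)) (𝓝[>] 0) (𝓝 0) := by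
  have hcosh (η : ℝ) : Real.cosh η + 1 ≠ 0 := by linarith [Real.one_le_cosh η]
  have hcont : Continuous fun η : ℝ =>
      Real.sinh η * (Real.sinh η * Real.log (Real.sinh η)) / (Real.cosh η + 1) :=
    (Real.continuous_sinh.mul (Real.continuous_mul_log.comp Real.continuous_sinh)).div
      (by fun_prop) hcosh
  have hlim := (hcont.tendsto 0).mono_left (nhdsWithin_le_nhds (s := Ioi 0))
  rw [Real.sinh_zero, zero_mul, zero_div] at hlim
  refine hlim.congr fun η => ?_
  rw [div_eq_iff (hcosh η)]
  linear_combination -Real.log (Real.sinh η) * Real.cosh_sq η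

lemma tendsto_log_sub_log_sinh_zero :
    Tendsto (fun η : ℝ => Real.log η - Real.log (Real.sinh η)) (𝓝[>] 0) (𝓝 0) := by
  have hslope : Tendsto (slope Real.sinh 0) (𝓝[>] 0) (𝓝 1) := by
    simpa using (Real.hasDerivAt_sinh 0).tendsto_slope.mono_left
      (nhdsGT_le_nhdsNE 0)
  have hlog := ((Real.continuousAt_log one_ne_zero).tendsto.comp hslope).neg
  rw [Real.log_one, neg_zero] at hlog
  refine hlog.congr' ?_
  filter_upwards [self_mem_nhdsWithin] with η (hη : 0 < η)
  rw [Function.comp_apply, slope_def_field, Real.sinh_zero, sub_zero, sub_zero,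
    Real.log_div (Real.sinh_pos_iff.mpr hη).ne' hη.ne', neg_sub]

section Limit

variable {ω δ : ℝ}

lemma exists_norm_innerSeries_zero_le (hω : 0 < ω) (hδ₀ : 0 ≤ δ) (hδ₁ : δ < 1) :
    ∃ C : ℝ, ∀ (f : ℝ → ℂ) (K : ℝ), (∀ u ∈ Icc 0 ω⁻¹, ‖f u‖ ≤ K) →
      ‖innerSeries ω δ f 0 0‖ ≤ K * C := by
  have hsum : Summable fun k : ℕ => ((k + 1 : ℕ) : ℝ) ^ (-(1 + (1 - δ))) :=
    summable_natCast_add_one_rpow (by linarith)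
  refine ⟨ω ^ (-((0 : ℕ) + 2) : ℝ) / (1 - δ) * ∑' k : ℕ, ((k + 1 : ℕ) : ℝ) ^ (-(1 + (1 - δ))),
    fun f K hK => ?_⟩
  rw [← mul_assoc, ← mul_div_assoc]
  refine tsum_of_norm_bounded (hsum.hasSum.mul_left _) fun k => ?_
  refine norm_innerTerm_le hω hδ₁.le k.succ_pos (fun u hu => ?_) (by linarith) ?_ ?_
  · simpa [taylorRemainder_zero] using hK u hu
  · simpa using hδ₀
  · simp [innerExponent_re]

lemma tendsto_innerSeries_coneKernel (hω : 0 < ω) (hδ₀ : 0 ≤ δ) (hδ₁ : δ < 1) :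
    Tendsto (fun η : ℝ => innerSeries ω δ (coneKernel η) 0 0) (𝓝[>] 0) (𝓝 0) := by
  obtain ⟨C, hC⟩ := exists_norm_innerSeries_zero_le hω hδ₀ hδ₁
  refine squeeze_zero_norm
    (a := fun η => Real.cosh η * Real.sinh η ^ 4 / 8 * ω⁻¹ ^ 3 * C) (fun η => ?_) ?_
  · refine hC _ _ fun u hu => (norm_coneKernel_le_mul_pow hu.1).trans ?_
    have := Real.cosh_pos η
    gcongr
    exacts [hu.1, hu.2]
  · have h : Continuous fun η => Real.cosh η * Real.sinh η ^ 4 / 8 * ω⁻¹ ^ 3 * C := by fun_prop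
    simpa using (h.tendsto 0).mono_left nhdsWithin_le_nhds

/-- The continuation of `Ω₂`. -/
noncomputable def Omega2 (ω δ η : ℝ) : ℂ → ℂ :=
  doubleContinuation ω δ (coneKernel η) (coneMellin η)

lemma tendsto_Omega2_zero (ω δ : ℝ) :
    Tendsto (fun η : ℝ => Omega2 ω δ η 0) (𝓝[>] 0) (𝓝 (-(1 / (12 * (ω : ℂ))))) := by
  have h := (tendsto_cosh_zero.neg.div_const 12).div_const (ω : ℂ)
  rw [neg_div, neg_div, div_div] at h
  refine h.congr fun η => ?_
  rw [Omega2, doubleContinuation_zero, coneMellin_zero]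

lemma deriv_Omega2_zero (hω : 0 < ω) (hδ₀ : 0 ≤ δ) (hδ₁ : δ < 1) {η : ℝ} (hη : 0 < η) :
    deriv (Omega2 ω δ η) 0 =
      -Real.cosh η / (6 * ω) * (Real.eulerMascheroniConstant - Real.log ω +
          Real.log (Real.sinh η) - 1 / 2 - Real.log 2) -
        2 * innerSeries ω δ (coneKernel η) 0 0 := by
  have hω' : (ω : ℂ) ≠ 0 := Complex.ofReal_ne_zero.mpr hω.ne'
  rw [Omega2, deriv_doubleContinuation_zero hω hδ₀ hδ₁ (contDiff_coneKernel η)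
    (coneKernel_isBigO_inv hη.ne')
    (fun τ hτ₁ hτ₂ => mellin_coneKernel hη (by linarith) (by linarith))
    (hasDerivAt_coneMellin_zero hη), coneMellin_zero]
  field_simp
  ring

lemma tendsto_deriv_Omega2_zero (hω : 0 < ω) (hδ₀ : 0 ≤ δ) (hδ₁ : δ < 1) :
    Tendsto (fun η : ℝ => deriv (Omega2 ω δ η) 0 -
      (-(Real.eulerMascheroniConstant : ℂ) / (6 * (ω : ℂ)) + 1 / (12 * (ω : ℂ)) +
        (Real.log 2 : ℂ) / (6 * (ω : ℂ)) + (Real.log ω : ℂ) / (6 * (ω : ℂ)) -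
        (Real.log η : ℂ) / (6 * (ω : ℂ)))) (𝓝[>] 0) (𝓝 0) := by
  have hω' : (ω : ℂ) ≠ 0 := Complex.ofReal_ne_zero.mpr hω.ne'
  have hlog₁ := (Complex.continuous_ofReal.tendsto _).comp tendsto_cosh_sub_one_mul_log_sinh_zero
  have hlog₂ := (Complex.continuous_ofReal.tendsto _).comp tendsto_log_sub_log_sinh_zero
  have h := ((((tendsto_const_nhds (x := (1 : ℂ))).sub tendsto_cosh_zero).mul_const
    (Real.eulerMascheroniConstant - Real.log ω - 1 / 2 - Real.log 2 : ℂ)).add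
    (hlog₂.sub hlog₁)).div_const (6 * (ω : ℂ)) |>.sub
    ((tendsto_innerSeries_coneKernel hω hδ₀ hδ₁).const_mul 2)
  simp only [sub_self, zero_mul, add_zero, mul_zero, zero_div, Complex.ofReal_zero] at h
  refine h.congr' ?_
  filter_upwards [self_mem_nhdsWithin] with η hη
  rw [deriv_Omega2_zero hω hδ₀ hδ₁ hη, Function.comp_apply, Function.comp_apply,
    Complex.ofReal_mul, Complex.ofReal_sub, Complex.ofReal_sub, Complex.ofReal_one]
  field_simp
  ring

end Limit

theorem statement13_general (ω : ℕ) (hω : 1 ≤ ω) (δ : ℝ) (hδ₀ : 0 ≤ δ) (hδ₁ : δ < 1) :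
    ∃ F : ℝ → ℂ → ℂ,
      (∀ η : ℝ, 0 < η →
        (∀ s ∈ {s : ℂ | 0 < s.re},
          Summable (fun p : ℕ × ℕ => ‖Omega2Term ω η δ (p.1 + 1) p.2 s‖)) ∧
        TendstoLocallyUniformlyOn
          (fun (N : Finset (ℕ × ℕ)) (s : ℂ) => ∑ p ∈ N, Omega2Term ω η δ (p.1 + 1) p.2 s)
          (fun s : ℂ => ∑' p : ℕ × ℕ, Omega2Term ω η δ (p.1 + 1) p.2 s)
          atTop {s : ℂ | 0 < s.re} ∧
        MeromorphicOn (F η) Set.univ ∧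
        Set.EqOn (F η) (fun s : ℂ => ∑' p : ℕ × ℕ, Omega2Term ω η δ (p.1 + 1) p.2 s)
          {s : ℂ | 0 < s.re} ∧
        AnalyticAt ℂ (F η) 0) ∧
      Tendsto (fun η : ℝ => F η 0) (nhdsWithin 0 (Set.Ioi 0))
        (nhds (-(1 / (12 * (ω : ℂ))))) ∧
      Tendsto
        (fun η : ℝ => deriv (F η) 0 -
          (-(Real.eulerMascheroniConstant : ℂ) / (6 * (ω : ℂ)) + 1 / (12 * (ω : ℂ)) +
            (Real.log 2 : ℂ) / (6 * (ω : ℂ)) + (Real.log ω : ℂ) / (6 * (ω : ℂ)) -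
            (Real.log η : ℂ) / (6 * (ω : ℂ))))
        (nhdsWithin 0 (Set.Ioi 0)) (nhds 0) := by
  have hω' : (0 : ℝ) < ω := mod_cast hω
  refine ⟨Omega2 ω δ, fun η hη => ?_, tendsto_Omega2_zero ω δ,
    tendsto_deriv_Omega2_zero hω' hδ₀ hδ₁⟩
  have hsmooth := contDiff_coneKernel η
  have hcont : Continuous (coneKernel η) := (hsmooth 0).continuous
  have hdecay := coneKernel_isBigO_inv hη.ne'
  have hmellin (τ : ℂ) (hτ₁ : 0 < τ.re) (hτ₂ : τ.re < 1 / 2) :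
      mellin (coneKernel η) (1 - 2 * τ) = coneMellin η τ :=
    mellin_coneKernel hη (by linarith) (by linarith)
  simp only [Omega2Term_eq_doubleTerm]
  exact ⟨fun s hs => summable_norm_doubleTerm hω' hδ₀ hcont hdecay hs,
    tendstoLocallyUniformlyOn_sum_doubleTerm hω' hδ₀ hcont hdecay,
    meromorphicOn_univ.mpr (meromorphic_doubleContinuation hω' hδ₀ hδ₁ hsmooth hdecay
      (meromorphic_coneMellin hη.ne') hmellin),
    fun s hs => doubleContinuation_eq_tsum hω' hδ₀ hcont hdecay hs,
    analyticAt_doubleContinuation_zero hω' hδ₀ hδ₁ hsmooth hdecay hmellin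
      (analyticAt_coneMellin_zero hη)⟩

/-- for fixed integer `ω ≥ 1` and `δ ∈ (0,1/8)`, for every `η > 0` the double
series `Ω₂(s)` converges absolutely and locally uniformly on the strip `1 < Re(s) < 2`, and its
sum extends to a meromorphic function on `ℂ` holomorphic at (a neighborhood of) `s = 0`;
moreover, as `η → 0⁺`, `Ω₂(0) → -1/(12ω)` and
`Ω₂'(0) - (-γ/(6ω) + 1/(12ω) + log 2/(6ω) + log ω/(6ω) - log η/(6ω)) → 0`. -/
theorem statement13 (ω : ℕ) (hω : 1 ≤ ω) (δ : ℝ) (hδ0 : 0 < δ) (hδ1 : δ < 1 / 8) :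
    ∃ F : ℝ → ℂ → ℂ,
      (∀ η : ℝ, 0 < η →
        (∀ s ∈ {s : ℂ | 1 < s.re ∧ s.re < 2},
          Summable (fun p : ℕ × ℕ => ‖Omega2Term ω η δ (p.1 + 1) p.2 s‖)) ∧
        TendstoLocallyUniformlyOn
          (fun (N : Finset (ℕ × ℕ)) (s : ℂ) => ∑ p ∈ N, Omega2Term ω η δ (p.1 + 1) p.2 s)
          (fun s : ℂ => ∑' p : ℕ × ℕ, Omega2Term ω η δ (p.1 + 1) p.2 s)
          atTop {s : ℂ | 1 < s.re ∧ s.re < 2} ∧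
        MeromorphicOn (F η) Set.univ ∧
        Set.EqOn (F η) (fun s : ℂ => ∑' p : ℕ × ℕ, Omega2Term ω η δ (p.1 + 1) p.2 s)
          {s : ℂ | 1 < s.re ∧ s.re < 2} ∧
        AnalyticAt ℂ (F η) 0) ∧
      Tendsto (fun η : ℝ => F η 0) (nhdsWithin 0 (Set.Ioi 0))
        (nhds (-(1 / (12 * (ω : ℂ))))) ∧
      Tendsto
        (fun η : ℝ => deriv (F η) 0 -
          (-(Real.eulerMascheroniConstant : ℂ) / (6 * (ω : ℂ)) + 1 / (12 * (ω : ℂ)) +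
            (Real.log 2 : ℂ) / (6 * (ω : ℂ)) + (Real.log ω : ℂ) / (6 * (ω : ℂ)) -
            (Real.log η : ℂ) / (6 * (ω : ℂ))))
        (nhdsWithin 0 (Set.Ioi 0)) (nhds 0) := by
  have hstrip : {s : ℂ | 1 < s.re ∧ s.re < 2} ⊆ {s : ℂ | 0 < s.re} := fun s hs =>
    zero_lt_one.trans hs.1
  obtain ⟨F, hF, hlim⟩ := statement13_general ω hω δ hδ0.le (by linarith)
  refine ⟨F, fun η hη => ?_, hlim⟩
  obtain ⟨hsum, hunif, hmero, heq, han⟩ := hF η hη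
  exact ⟨fun s hs => hsum s (hstrip hs), hunif.mono hstrip, hmero, heq.mono hstrip, han⟩
end

section
/- For every w ∈ ℂ with Re(w) > 1, one has ∫₁^{∞} (log(u) - log(u+1)) · u^{-w} du = -log(2)/(w-1) + (ψ((w+1)/2) - ψ(w/2))/(2(w-1)). -/
open MeasureTheory Filter

/-- The digamma function `ψ(z) = Γ'(z)/Γ(z)`. -/
noncomputable def digamma (z : ℂ) : ℂ := deriv Complex.Gamma z / Complex.Gamma z

/-!
Since `z Γ(z) → 1` as `z → 0`, the difference `B(a, z) - B(b, z)` of Beta integrals tends to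
`ψ(b) - ψ(a)`. Passing to the limit under the integral sign gives Gauss' formula
`ψ(b) - ψ(a) = ∫₀¹ (t^{a-1} - t^{b-1}) / (1 - t) dt`, and `t = u⁻²` turns its case `a = w/2`,
`b = (w+1)/2` into `2 ∫₁^∞ u^{-w} / (u + 1) du`. Integrating by parts against `u^{1-w} / (1 - w)`
reduces the integral of `(log u - log (u + 1)) u^{-w}` to this one, because
`(1/u - 1/(u+1)) u^{1-w} = u^{-w} / (u + 1)`.
-/

open Set Topology

theorem ne_neg_natCast_of_re_pos {a : ℂ} (ha : 0 < a.re) (m : ℕ) : a ≠ -m := by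
  rintro rfl
  simp only [Complex.neg_re, Complex.natCast_re, Left.neg_pos_iff] at ha
  exact ha.not_ge m.cast_nonneg

theorem hasDerivAt_Gamma_div_Gamma_add {a : ℂ} (ha : ∀ m : ℕ, a ≠ -m) :
    HasDerivAt (fun z : ℂ ↦ Complex.Gamma a / Complex.Gamma (a + z)) (-digamma a) 0 := by
  have hΓ : Complex.Gamma a ≠ 0 := Complex.Gamma_ne_zero ha
  have hderiv : HasDerivAt (fun z : ℂ ↦ Complex.Gamma (a + z)) (deriv Complex.Gamma a) 0 :=
    HasDerivAt.comp_const_add a 0 (by simpa using (Complex.differentiableAt_Gamma a ha).hasDerivAt)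
  refine ((hasDerivAt_const 0 (Complex.Gamma a)).div hderiv (by simpa using hΓ)).congr_deriv ?_
  simp only [add_zero, digamma]
  field_simp
  ring

theorem tendsto_betaIntegral_sub_betaIntegral {a b : ℂ} (ha : 0 < a.re) (hb : 0 < b.re) :
    Tendsto (fun z ↦ Complex.betaIntegral a z - Complex.betaIntegral b z)
      (𝓝[{z | 0 < z.re}] 0) (𝓝 (digamma b - digamma a)) := by
  have hslope := ((hasDerivAt_Gamma_div_Gamma_add (ne_neg_natCast_of_re_pos ha)).sub
    (hasDerivAt_Gamma_div_Gamma_add (ne_neg_natCast_of_re_pos hb))).tendsto_slope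
  have hlim := (Complex.tendsto_self_mul_Gamma_nhds_zero.mul hslope).mono_left
    (nhdsWithin_mono 0 (s := {z : ℂ | 0 < z.re}) (by rintro _ hz rfl; simp at hz))
  rw [one_mul, neg_sub_neg] at hlim
  refine hlim.congr' ?_
  filter_upwards [self_mem_nhdsWithin] with z hz
  have hz0 : z ≠ 0 := by rintro rfl; simp at hz
  have hΓa := Complex.Gamma_ne_zero_of_re_pos ha
  have hΓb := Complex.Gamma_ne_zero_of_re_pos hb
  rw [Complex.betaIntegral_eq_Gamma_mul_div _ _ ha hz,
    Complex.betaIntegral_eq_Gamma_mul_div _ _ hb hz]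
  simp only [slope_def_field, Pi.sub_apply, add_zero, div_self hΓa, div_self hΓb]
  field_simp
  ring

theorem betaIntegral_sub_betaIntegral {a b z : ℂ} (ha : 0 < a.re) (hb : 0 < b.re)
    (hz : 0 < z.re) :
    Complex.betaIntegral a z - Complex.betaIntegral b z =
      ∫ t in Ioo (0 : ℝ) 1, ((t : ℂ) ^ (a - 1) - (t : ℂ) ^ (b - 1)) * (1 - (t : ℂ)) ^ (z - 1) := by
  simp only [Complex.betaIntegral, sub_mul]
  rw [← intervalIntegral.integral_sub (Complex.betaIntegral_convergent ha hz)
    (Complex.betaIntegral_convergent hb hz), intervalIntegral.integral_of_le zero_le_one,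
    integral_Ioc_eq_integral_Ioo]

theorem integrable_slope_of_differentiableAt {E : Type*} [NormedAddCommGroup E] [NormedSpace ℝ E]
    {μ : Measure ℝ} [IsFiniteMeasure μ] {f : ℝ → E} {x : ℝ} (hf : Integrable f μ)
    (hx : DifferentiableAt ℝ f x) : Integrable (slope f x) μ := by
  obtain ⟨C, hC, hbound⟩ := hx.isBigO_sub.exists_pos
  obtain ⟨δ, hδ, hball⟩ := Metric.eventually_nhds_iff.1 hbound.bound
  have hsub : Integrable (fun t ↦ f t - f x) μ := hf.sub (integrable_const _)
  refine ((integrable_const C).add (hsub.norm.const_mul δ⁻¹)).mono' ?_ (ae_of_all _ fun t ↦ ?_)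
  · exact (by fun_prop : Measurable fun t : ℝ ↦ (t - x)⁻¹).aestronglyMeasurable.smul
      hsub.aestronglyMeasurable
  · rw [slope_def_module, norm_smul, norm_inv]
    rcases lt_or_ge (dist t x) δ with hnear | hfar
    · calc ‖t - x‖⁻¹ * ‖f t - f x‖ ≤ C := inv_mul_le_of_le_mul₀ (norm_nonneg _) hC.le
            (by rw [mul_comm]; exact hball hnear)
        _ ≤ C + δ⁻¹ * ‖f t - f x‖ := le_add_of_nonneg_right (by positivity)
    · calc ‖t - x‖⁻¹ * ‖f t - f x‖ ≤ δ⁻¹ * ‖f t - f x‖ := by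
            rw [← dist_eq_norm]
            gcongr
        _ ≤ C + δ⁻¹ * ‖f t - f x‖ := le_add_of_nonneg_left hC.le

theorem integrableOn_cpow_sub_cpow_div_one_sub {a b : ℂ} (ha : 0 < a.re) (hb : 0 < b.re) :
    IntegrableOn (fun t : ℝ ↦ ((t : ℂ) ^ (a - 1) - (t : ℂ) ^ (b - 1)) / (1 - (t : ℂ)))
      (Ioo 0 1) := by
  have integrableOn_cpow {c : ℂ} (hc : 0 < c.re) :
      IntegrableOn (fun t : ℝ ↦ (t : ℂ) ^ (c - 1)) (Ioo 0 1) :=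
    (intervalIntegral.integrableOn_Ioo_cpow_iff one_pos).2 (by simpa using hc)
  have differentiableAt_cpow (c : ℂ) : DifferentiableAt ℝ (fun t : ℝ ↦ (t : ℂ) ^ c) 1 :=
    (Complex.hasStrictDerivAt_cpow_const
      (by simp : ((1 : ℝ) : ℂ) ∈ Complex.slitPlane)).hasDerivAt.comp_ofReal.differentiableAt
  refine (integrable_slope_of_differentiableAt
    ((integrableOn_cpow hb).sub (integrableOn_cpow ha))
    ((differentiableAt_cpow (b - 1)).sub (differentiableAt_cpow (a - 1)))).congr
    (ae_of_all _ fun t ↦ ?_)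
  simp only [slope_def_module, Pi.sub_apply, Complex.ofReal_one, Complex.one_cpow, sub_self,
    sub_zero, Complex.real_smul, Complex.ofReal_inv, Complex.ofReal_sub]
  rw [← neg_sub (1 : ℂ), inv_neg, div_eq_inv_mul]
  ring

theorem norm_one_sub_cpow_sub_one_le {t : ℝ} (ht0 : 0 ≤ t) (ht1 : t < 1) {z : ℂ}
    (hz : 0 ≤ z.re) :
    ‖(1 - (t : ℂ)) ^ (z - 1)‖ ≤ ‖1 - (t : ℂ)‖⁻¹ := by
  have hpos : 0 < 1 - t := sub_pos.2 ht1
  rw [← Complex.ofReal_one, ← Complex.ofReal_sub, Complex.norm_cpow_eq_rpow_re_of_pos hpos,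
    Complex.norm_of_nonneg hpos.le, ← Real.rpow_neg_one]
  exact Real.rpow_le_rpow_of_exponent_ge hpos (by linarith) (by simpa using hz)

theorem digamma_sub_digamma_eq_integral {a b : ℂ} (ha : 0 < a.re) (hb : 0 < b.re) :
    digamma b - digamma a =
      ∫ t in Ioo (0 : ℝ) 1, ((t : ℂ) ^ (a - 1) - (t : ℂ) ^ (b - 1)) / (1 - (t : ℂ)) := by
  have : (𝓝[{z : ℂ | 0 < z.re}] 0).NeBot := by
    rw [← mem_closure_iff_nhdsWithin_neBot, Complex.closure_setOfPred_lt_re]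
    simp
  refine tendsto_nhds_unique (tendsto_betaIntegral_sub_betaIntegral ha hb) ?_
  refine Tendsto.congr' (eventually_nhdsWithin_of_forall fun z hz ↦
    (betaIntegral_sub_betaIntegral ha hb hz).symm) ?_
  refine tendsto_integral_filter_of_dominated_convergence _
    (Eventually.of_forall fun z ↦ (by fun_prop : Measurable _).aestronglyMeasurable) ?_
    (integrableOn_cpow_sub_cpow_div_one_sub ha hb).norm ?_
  · filter_upwards [self_mem_nhdsWithin] with z (hz : 0 < z.re)
    filter_upwards [ae_restrict_mem measurableSet_Ioo] with t ht
    rw [norm_mul, norm_div, div_eq_mul_inv]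
    gcongr
    exact norm_one_sub_cpow_sub_one_le ht.1.le ht.2 hz.le
  · filter_upwards [ae_restrict_mem measurableSet_Ioo] with t ht
    have hne : 1 - (t : ℂ) ≠ 0 := by exact_mod_cast (sub_pos.2 ht.2).ne'
    have hcont : Continuous fun z : ℂ ↦ (1 - (t : ℂ)) ^ (z - 1) :=
      (by fun_prop : Continuous fun z : ℂ ↦ z - 1).const_cpow (.inl hne)
    have hlim := (hcont.tendsto 0).mono_left (nhdsWithin_le_nhds (s := {z : ℂ | 0 < z.re}))
    rw [zero_sub, Complex.cpow_neg_one] at hlim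
    exact hlim.const_mul _

theorem image_rpow_neg_Ioi_one {p : ℝ} (hp : 0 < p) :
    (fun u : ℝ ↦ u ^ (-p)) '' Ioi 1 = Ioo 0 1 := by
  ext t
  constructor
  · rintro ⟨u, hu, rfl⟩
    exact ⟨Real.rpow_pos_of_pos (one_pos.trans hu) _,
      Real.rpow_lt_one_of_one_lt_of_neg hu (neg_neg_of_pos hp)⟩
  · rintro ⟨h0, h1⟩
    refine ⟨t ^ (-p)⁻¹, Real.one_lt_rpow_of_pos_of_lt_one_of_neg h0 h1 (by simpa using hp), ?_⟩
    exact Real.rpow_inv_rpow h0.le (neg_ne_zero.2 hp.ne')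

theorem integral_Ioo_zero_one_eq_integral_Ioi_one_rpow_neg {E : Type*} [NormedAddCommGroup E]
    [NormedSpace ℝ E] {p : ℝ} (hp : 0 < p) (g : ℝ → E) :
    ∫ t in Ioo 0 1, g t = ∫ u in Ioi 1, (p * u ^ (-p - 1)) • g (u ^ (-p)) := by
  rw [← image_rpow_neg_Ioi_one hp, integral_image_eq_integral_deriv_smul_of_antitoneOn
    measurableSet_Ioi
    (fun u hu ↦ (Real.hasDerivAt_rpow_const (.inl (one_pos.trans hu).ne')).hasDerivWithinAt)
    ((Real.antitoneOn_rpow_Ioi_of_exponent_nonpos (neg_nonpos.2 hp.le)).mono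
      (Ioi_subset_Ioi zero_le_one))]
  simp only [neg_mul, neg_neg]

theorem two_mul_rpow_smul_cpow_sub_cpow_div_one_sub {u : ℝ} (hu : 1 < u) (w : ℂ) :
    (2 * u ^ (-2 - 1 : ℝ)) • ((((u ^ (-2 : ℝ) : ℝ) : ℂ) ^ (w / 2 - 1) -
      ((u ^ (-2 : ℝ) : ℝ) : ℂ) ^ ((w + 1) / 2 - 1)) / (1 - ((u ^ (-2 : ℝ) : ℝ) : ℂ))) =
    2 * ((u : ℂ) ^ (-w) / ((u : ℂ) + 1)) := by
  have hu0 : 0 < u := one_pos.trans hu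
  have hne : (u : ℂ) ≠ 0 := by exact_mod_cast hu0.ne'
  have hadd : (u : ℂ) + 1 ≠ 0 := by exact_mod_cast (by positivity : u + 1 ≠ 0)
  have hsub : (u : ℂ) ^ 2 - 1 ≠ 0 := by
    exact_mod_cast (sub_pos.2 (one_lt_pow₀ hu two_ne_zero)).ne'
  have hcpow_left : ((u ^ (-2 : ℝ) : ℝ) : ℂ) ^ (w / 2 - 1) = (u : ℂ) ^ (-w) * (u : ℂ) ^ 2 := by
    rw [← Complex.cpow_mul_ofReal_nonneg hu0.le,
      show ((-2 : ℝ) : ℂ) * (w / 2 - 1) = -w + 2 by push_cast; ring,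
      Complex.cpow_add _ _ hne, Complex.cpow_ofNat]
  have hcpow_right : ((u ^ (-2 : ℝ) : ℝ) : ℂ) ^ ((w + 1) / 2 - 1) = (u : ℂ) ^ (-w) * u := by
    rw [← Complex.cpow_mul_ofReal_nonneg hu0.le,
      show ((-2 : ℝ) : ℂ) * ((w + 1) / 2 - 1) = -w + 1 by push_cast; ring,
      Complex.cpow_add _ _ hne, Complex.cpow_one]
  have hinv_sq : u ^ (-2 : ℝ) = (u ^ 2)⁻¹ := by
    rw [Real.rpow_neg hu0.le, Real.rpow_ofNat]
  rw [hcpow_left, hcpow_right, Real.rpow_sub_one hu0.ne', hinv_sq, Complex.real_smul]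
  push_cast
  field_simp
  ring

theorem digamma_add_one_div_two_sub_digamma_div_two {w : ℂ} (hw : 0 < w.re) :
    digamma ((w + 1) / 2) - digamma (w / 2) =
      2 * ∫ u in Ioi (1 : ℝ), (u : ℂ) ^ (-w) / ((u : ℂ) + 1) := by
  rw [digamma_sub_digamma_eq_integral (by simpa using hw) (by simpa using by linarith),
    integral_Ioo_zero_one_eq_integral_Ioi_one_rpow_neg two_pos, ← integral_const_mul]
  exact setIntegral_congr_fun measurableSet_Ioi fun u hu ↦
    two_mul_rpow_smul_cpow_sub_cpow_div_one_sub hu w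

theorem abs_log_sub_log_add_one_le_inv {u : ℝ} (hu : 0 < u) :
    |Real.log u - Real.log (u + 1)| ≤ u⁻¹ := by
  have hmono : Real.log u ≤ Real.log (u + 1) := Real.log_le_log hu (by linarith)
  rw [abs_sub_comm, abs_of_nonneg (sub_nonneg.2 hmono), ← Real.log_div (by positivity) hu.ne']
  calc Real.log ((u + 1) / u) ≤ (u + 1) / u - 1 := Real.log_le_sub_one_of_pos (by positivity)
    _ = u⁻¹ := by field_simp; ring

theorem norm_log_sub_log_add_one_mul_cpow_le {u : ℝ} (hu : 0 < u) (z : ℂ) :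
    ‖((Real.log u - Real.log (u + 1) : ℝ) : ℂ) * (u : ℂ) ^ z‖ ≤ u ^ (z.re - 1) := by
  rw [norm_mul, Complex.norm_real, Complex.norm_cpow_eq_rpow_re_of_pos hu,
    Real.rpow_sub_one hu.ne', div_eq_inv_mul]
  gcongr
  exact abs_log_sub_log_add_one_le_inv hu

theorem integrableOn_Ioi_log_sub_log_add_one_mul_cpow {w : ℂ} (hw : 0 < w.re) :
    IntegrableOn (fun u : ℝ ↦ ((Real.log u - Real.log (u + 1) : ℝ) : ℂ) * (u : ℂ) ^ (-w))
      (Ioi 1) := by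
  refine (integrableOn_Ioi_rpow_of_lt (by linarith : -w.re - 1 < -1) one_pos).mono'
    (by fun_prop : Measurable _).aestronglyMeasurable ?_
  filter_upwards [ae_restrict_mem measurableSet_Ioi] with u hu
  exact norm_log_sub_log_add_one_mul_cpow_le (one_pos.trans hu) (-w)

theorem integrableOn_Ioi_cpow_div_add_one {w : ℂ} (hw : 0 < w.re) :
    IntegrableOn (fun u : ℝ ↦ (u : ℂ) ^ (-w) / ((u : ℂ) + 1)) (Ioi 1) := by
  refine (integrableOn_Ioi_rpow_of_lt (by linarith : -w.re - 1 < -1) one_pos).mono'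
    (by fun_prop : Measurable _).aestronglyMeasurable ?_
  filter_upwards [ae_restrict_mem measurableSet_Ioi] with u hu
  have hu0 : 0 < u := one_pos.trans hu
  rw [norm_div, Complex.norm_cpow_eq_rpow_re_of_pos hu0, ← Complex.ofReal_one,
    ← Complex.ofReal_add, Complex.norm_of_nonneg (by positivity), Real.rpow_sub_one hu0.ne',
    Complex.neg_re]
  gcongr
  linarith

theorem tendsto_log_sub_log_add_one_mul_cpow_atTop {z : ℂ} (hz : z.re < 1) :
    Tendsto (fun u : ℝ ↦ ((Real.log u - Real.log (u + 1) : ℝ) : ℂ) * (u : ℂ) ^ z) atTop (𝓝 0) := by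
  refine squeeze_zero_norm' ?_ (tendsto_rpow_neg_atTop (sub_pos.2 hz))
  filter_upwards [eventually_gt_atTop 0] with u hu
  rw [neg_sub]
  exact norm_log_sub_log_add_one_mul_cpow_le hu z

theorem hasDerivAt_log_sub_log_add_one {u : ℝ} (hu : 0 < u) :
    HasDerivAt (fun x : ℝ ↦ ((Real.log x - Real.log (x + 1) : ℝ) : ℂ))
      ((u⁻¹ - (u + 1)⁻¹ : ℝ) : ℂ) u :=
  ((Real.hasDerivAt_log hu.ne').sub
    ((Real.hasDerivAt_log (by positivity)).comp_add_const u 1)).ofReal_comp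

theorem inv_sub_inv_add_one_mul_cpow {u : ℝ} (hu : 0 < u) (z : ℂ) :
    ((u⁻¹ - (u + 1)⁻¹ : ℝ) : ℂ) * (u : ℂ) ^ (z + 1) = (u : ℂ) ^ z / ((u : ℂ) + 1) := by
  have hne : (u : ℂ) ≠ 0 := by exact_mod_cast hu.ne'
  have hadd : (u : ℂ) + 1 ≠ 0 := by exact_mod_cast (by positivity : u + 1 ≠ 0)
  rw [Complex.cpow_add _ _ hne, Complex.cpow_one]
  push_cast
  field_simp
  ring

theorem integral_Ioi_log_sub_log_add_one_mul_cpow {w : ℂ} (hw : 0 < w.re) (hw1 : w ≠ 1) :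
    ∫ u in Ioi (1 : ℝ), ((Real.log u - Real.log (u + 1) : ℝ) : ℂ) * (u : ℂ) ^ (-w) =
      (-(Real.log 2 : ℂ) + ∫ u in Ioi (1 : ℝ), (u : ℂ) ^ (-w) / ((u : ℂ) + 1)) / (w - 1) := by
  have hv (u : ℝ) (hu : 0 < u) :
      HasDerivAt (fun x : ℝ ↦ (x : ℂ) ^ (-w + 1) / (-w + 1)) ((u : ℂ) ^ (-w)) u :=
    hasDerivAt_ofReal_cpow_const' hu.ne' (by simpa using hw1)
  have hu'v : EqOn (fun u : ℝ ↦ (u : ℂ) ^ (-w) / ((u : ℂ) + 1) / (-w + 1))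
      (fun u : ℝ ↦ ((u⁻¹ - (u + 1)⁻¹ : ℝ) : ℂ) * ((u : ℂ) ^ (-w + 1) / (-w + 1))) (Ioi 1) := by
    intro u hu
    simp only [← mul_div_assoc, inv_sub_inv_add_one_mul_cpow (one_pos.trans hu)]
  have hone := ((hasDerivAt_log_sub_log_add_one one_pos).continuousAt.mul
    (hv 1 one_pos).continuousAt).tendsto.mono_left (nhdsWithin_le_nhds (s := Ioi 1))
  have hatTop := (tendsto_log_sub_log_add_one_mul_cpow_atTop (z := -w + 1)
    (by simpa using hw)).div_const (-w + 1)
  simp only [Pi.mul_apply, Real.log_one, one_add_one_eq_two, zero_sub, Complex.ofReal_neg,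
    Complex.ofReal_one, Complex.one_cpow] at hone
  simp only [mul_div_assoc, zero_div] at hatTop
  rw [integral_Ioi_mul_deriv_eq_deriv_mul
    (fun u hu ↦ hasDerivAt_log_sub_log_add_one (one_pos.trans hu))
    (fun u hu ↦ hv u (one_pos.trans hu)) (integrableOn_Ioi_log_sub_log_add_one_mul_cpow hw)
    (IntegrableOn.congr_fun ((integrableOn_Ioi_cpow_div_add_one hw).div_const _) hu'v
      measurableSet_Ioi)
    hone hatTop, ← setIntegral_congr_fun measurableSet_Ioi hu'v, integral_div]
  have hsub : w - 1 ≠ 0 := sub_ne_zero.2 hw1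
  rw [show -w + 1 = -(w - 1) by ring]
  field_simp
  ring

theorem statement14_general (w : ℂ) (hw : 0 < w.re) (hw1 : w ≠ 1) :
    ∫ u in Ioi (1 : ℝ), ((Real.log u - Real.log (u + 1) : ℝ) : ℂ) * (u : ℂ) ^ (-w) =
      -(Real.log 2 : ℂ) / (w - 1) +
        (digamma ((w + 1) / 2) - digamma (w / 2)) / (2 * (w - 1)) := by
  rw [integral_Ioi_log_sub_log_add_one_mul_cpow hw hw1,
    digamma_add_one_div_two_sub_digamma_div_two hw, mul_div_mul_left _ _ two_ne_zero, add_div]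

/-- for every `w ∈ ℂ` with `Re(w) > 1`,
`∫₁^∞ (log u - log(u+1))·u^{-w} du = -log 2/(w-1) + (ψ((w+1)/2) - ψ(w/2))/(2(w-1))`. -/
theorem statement14 (w : ℂ) (hw : 1 < w.re) :
    ∫ u in Set.Ioi (1 : ℝ),
        ((Real.log u - Real.log (u + 1) : ℝ) : ℂ) * (u : ℂ) ^ (-w) =
      -(Real.log 2 : ℂ) / (w - 1) + (digamma ((w + 1) / 2) - digamma (w / 2)) / (2 * (w - 1)) :=
  statement14_general w (one_pos.trans hw) (by rintro rfl; simp at hw)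
end

section
/- For every real β > 0 and every σ ∈ ℂ with 1/2 < Re(σ) < 1, one has ∫₀^{∞} u^{-2σ} · arsinh(u/β) du = β^{1-2σ} · Γ(1-σ)·Γ(σ - 1/2)/(2(2σ-1)·√π). -/
open MeasureTheory Filter

/-!
Everything is phrased through the Mellin transform `mellin f s = ∫₀^∞ t ^ (s - 1) f t dt`: the
claim is its value for `arsinh (· / β)` at `s = 1 - 2σ`. Scaling reduces to `β = 1`, and integrating
by parts replaces `arsinh` by its derivative `(1 + t²)^(-1/2)` at `s + 1`. The substitution
`y = x / (1 + x)` in Euler's Beta integral gives the Mellin transform of `(1 + x)^(-w)`, and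
`x = t²` then turns it into the required one; `Γ(1/2) = √π` accounts for the denominator.
-/

open Set Topology Asymptotics

section MellinByParts

variable {E : Type*} [NormedAddCommGroup E]

lemma integral_Ioi_of_hasDerivAt_of_tendsto_nhdsGT [NormedSpace ℝ E] [CompleteSpace E]
    {f f' : ℝ → E} {a : ℝ} {l m : E} (hderiv : ∀ x ∈ Ioi a, HasDerivAt f (f' x) x)
    (f'int : IntegrableOn f' (Ioi a))
    (hbot : Tendsto f (𝓝[>] a) (𝓝 l)) (htop : Tendsto f atTop (𝓝 m)) :
    ∫ x in Ioi a, f' x = m - l := by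
  have heq : ∀ x ∈ Ioi a, Function.update f a l =ᶠ[𝓝 x] f := fun x hx ↦
    (eventually_ne_nhds (ne_of_gt hx)).mono fun y hy ↦ Function.update_of_ne hy l f
  have hcont : ContinuousWithinAt (Function.update f a l) (Ici a) a := by
    rw [← Ici_sdiff_left] at hbot
    exact continuousWithinAt_update_same.2 hbot
  have htop' : Tendsto (Function.update f a l) atTop (𝓝 m) :=
    htop.congr' <| (eventually_ne_atTop a).mono fun x hx ↦ (Function.update_of_ne hx l f).symm
  simpa only [Function.update_self] using integral_Ioi_of_hasDerivAt_of_tendsto hcont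
    (fun x hx ↦ (hderiv x hx).congr_of_eventuallyEq (heq x hx)) f'int htop'

variable [NormedSpace ℂ E] {f f' : ℝ → E} {a b : ℝ} {s : ℂ}

lemma isBigO_cpow_smul_of_isBigO_rpow {l : Filter ℝ} (hl : ∀ᶠ t in l, 0 < t)
    (hf : f =O[l] (· ^ (-a))) :
    (fun t : ℝ ↦ (t : ℂ) ^ s • f t) =O[l] (· ^ (s.re - a)) := by
  have hcpow : (fun t : ℝ ↦ (t : ℂ) ^ s) =O[l] (· ^ s.re) :=
    .of_norm_eventuallyLE <| hl.mono fun t ht ↦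
      (Complex.norm_cpow_eq_rpow_re_of_pos ht s).le
  refine (hcpow.smul hf).congr' .rfl (hl.mono fun t ht ↦ ?_)
  simp only [smul_eq_mul, ← Real.rpow_add ht, sub_eq_add_neg]

lemma tendsto_cpow_smul_atTop_zero (hf : f =O[atTop] (· ^ (-a))) (hs : s.re < a) :
    Tendsto (fun t : ℝ ↦ (t : ℂ) ^ s • f t) atTop (𝓝 0) := by
  refine (isBigO_cpow_smul_of_isBigO_rpow (eventually_gt_atTop 0) hf).trans_tendsto ?_
  simpa only [neg_sub] using tendsto_rpow_neg_atTop (sub_pos.2 hs)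

lemma tendsto_cpow_smul_nhdsGT_zero (hf : f =O[𝓝[>] 0] (· ^ (-b))) (hs : b < s.re) :
    Tendsto (fun t : ℝ ↦ (t : ℂ) ^ s • f t) (𝓝[>] 0) (𝓝 0) := by
  refine (isBigO_cpow_smul_of_isBigO_rpow self_mem_nhdsWithin hf).trans_tendsto ?_
  have hpos : 0 < s.re - b := sub_pos.2 hs
  have hcont := Real.continuousAt_rpow_const 0 (s.re - b) (.inr hpos.le)
  rw [ContinuousAt, Real.zero_rpow hpos.ne'] at hcont
  exact hcont.mono_left nhdsWithin_le_nhds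

lemma hasDerivAt_cpow_smul {t : ℝ} {y : E} (ht : t ≠ 0) (hf : HasDerivAt f y t) :
    HasDerivAt (fun t : ℝ ↦ (t : ℂ) ^ s • f t)
      ((t : ℂ) ^ s • y + s • (t : ℂ) ^ (s - 1) • f t) t := by
  rw [smul_smul]
  rcases eq_or_ne s 0 with rfl | hs
  · simpa using hf
  · exact (hasDerivAt_ofReal_cpow_const ht hs).smul hf

lemma hasMellin_of_hasDerivAt_of_isBigO_rpow [CompleteSpace E] {m : E} (hs : s ≠ 0)
    (hderiv : ∀ t ∈ Ioi 0, HasDerivAt f (f' t) t)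
    (hf_top : f =O[atTop] (· ^ (-a))) (hs_top : s.re < a)
    (hf_bot : f =O[𝓝[>] 0] (· ^ (-b))) (hs_bot : b < s.re)
    (hf' : HasMellin f' (s + 1) m) : HasMellin f s (-s⁻¹ • m) := by
  have hf'int : IntegrableOn (fun t : ℝ ↦ (t : ℂ) ^ s • f' t) (Ioi 0) := by
    simpa only [MellinConvergent, add_sub_cancel_right] using hf'.1
  have hcont : ContinuousOn f (Ioi 0) := fun t ht ↦ (hderiv t ht).continuousAt.continuousWithinAt
  have hconv : MellinConvergent f s := mellinConvergent_of_isBigO_rpow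
    (hcont.locallyIntegrableOn measurableSet_Ioi) hf_top hs_top hf_bot hs_bot
  have hfint : IntegrableOn (fun t : ℝ ↦ s • (t : ℂ) ^ (s - 1) • f t) (Ioi 0) := hconv.smul s
  have hparts : mellin f' (s + 1) + s • mellin f s = 0 := by
    have h := integral_Ioi_of_hasDerivAt_of_tendsto_nhdsGT
      (fun t ht ↦ hasDerivAt_cpow_smul (ne_of_gt ht) (hderiv t ht)) (hf'int.add hfint)
      (tendsto_cpow_smul_nhdsGT_zero hf_bot hs_bot) (tendsto_cpow_smul_atTop_zero hf_top hs_top)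
    rw [integral_add hf'int hfint, integral_smul, sub_zero] at h
    simpa only [mellin, add_sub_cancel_right] using h
  refine ⟨hconv, ?_⟩
  rw [← hf'.2, eq_neg_of_add_eq_zero_left hparts, neg_smul_neg, inv_smul_smul₀ hs]

end MellinByParts

section BetaIntegral

lemma ofReal_inv_cpow {x : ℝ} (hx : 0 ≤ x) (z : ℂ) : ((x⁻¹ : ℝ) : ℂ) ^ z = (x : ℂ) ^ (-z) := by
  have harg : (x : ℂ).arg ≠ Real.pi := by
    rw [Complex.arg_ofReal_of_nonneg hx]
    exact Real.pi_ne_zero.symm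
  rw [Complex.ofReal_inv, Complex.inv_cpow _ _ harg, Complex.cpow_neg]

lemma hasDerivAt_div_one_add_s15 {x : ℝ} (hx : 1 + x ≠ 0) :
    HasDerivAt (fun x : ℝ ↦ x / (1 + x)) ((1 + x) ^ 2)⁻¹ x := by
  refine ((hasDerivAt_id x).div ((hasDerivAt_id x).const_add 1) hx).congr_deriv ?_
  simp [div_eq_mul_inv]

lemma bijOn_div_one_add : BijOn (fun x : ℝ ↦ x / (1 + x)) (Ioi 0) (Ioo 0 1) := by
  have hmaps : MapsTo (fun x : ℝ ↦ x / (1 + x)) (Ioi 0) (Ioo 0 1) := fun x (hx : 0 < x) ↦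
    ⟨by positivity, (div_lt_one (by positivity)).2 (by linarith)⟩
  have hmaps_inv : MapsTo (fun y : ℝ ↦ y / (1 - y)) (Ioo 0 1) (Ioi 0) := fun y hy ↦
    div_pos hy.1 (sub_pos.2 hy.2)
  refine InvOn.bijOn ⟨fun x (hx : 0 < x) ↦ ?_, fun y hy ↦ ?_⟩ hmaps hmaps_inv
  · field_simp
    ring
  · have : 1 - y ≠ 0 := (sub_pos.2 hy.2).ne'
    field_simp
    ring

lemma abs_deriv_smul_betaIntegrand_comp (s t : ℂ) {x : ℝ} (hx : 0 < x) :
    |((1 + x) ^ 2)⁻¹| • (((x / (1 + x) : ℝ) : ℂ) ^ (s - 1) *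
      (1 - ((x / (1 + x) : ℝ) : ℂ)) ^ (t - 1)) =
    (x : ℂ) ^ (s - 1) • ((1 + x : ℝ) : ℂ) ^ (-(s + t)) := by
  have hw : 0 < 1 + x := by positivity
  have hw' : ((1 + x : ℝ) : ℂ) ≠ 0 := Complex.ofReal_ne_zero.2 hw.ne'
  have hsub : 1 - ((x / (1 + x) : ℝ) : ℂ) = (((1 + x)⁻¹ : ℝ) : ℂ) := by
    rw [← Complex.ofReal_one, ← Complex.ofReal_sub]
    congr 1
    field_simp
    ring
  have hjac : (((1 + x) ^ 2)⁻¹ : ℝ) = ((1 + x : ℝ) : ℂ) ^ (-2 : ℂ) := by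
    rw [Complex.cpow_neg, Complex.cpow_ofNat]
    push_cast
    rfl
  rw [abs_of_pos (by positivity), hsub, div_eq_mul_inv, Complex.ofReal_mul,
    Complex.mul_cpow_ofReal_nonneg hx.le (by positivity), ofReal_inv_cpow hw.le,
    ofReal_inv_cpow hw.le, Complex.real_smul, hjac, smul_eq_mul,
    show -(s + t) = -2 + -(s - 1) + -(t - 1) by ring, Complex.cpow_add _ _ hw',
    Complex.cpow_add _ _ hw']
  ring

lemma hasMellin_one_add_cpow_neg {s t : ℂ} (hs : 0 < s.re) (ht : 0 < t.re) :
    HasMellin (fun x : ℝ ↦ ((1 + x : ℝ) : ℂ) ^ (-(s + t))) s (Complex.betaIntegral s t) := by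
  have hderiv : ∀ x ∈ Ioi (0 : ℝ),
      HasDerivWithinAt (fun x : ℝ ↦ x / (1 + x)) ((1 + x) ^ 2)⁻¹ (Ioi 0) x :=
    fun x (hx : 0 < x) ↦ (hasDerivAt_div_one_add_s15 (by positivity)).hasDerivWithinAt
  have hcongr := fun x (hx : x ∈ Ioi (0 : ℝ)) ↦ abs_deriv_smul_betaIntegrand_comp s t hx
  constructor
  · have hconv := Complex.betaIntegral_convergent hs ht
    rw [intervalIntegrable_iff_integrableOn_Ioo_of_le zero_le_one, ← bijOn_div_one_add.image_eq,
      integrableOn_image_iff_integrableOn_abs_deriv_smul measurableSet_Ioi hderiv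
        bijOn_div_one_add.injOn] at hconv
    exact (integrableOn_congr_fun hcongr measurableSet_Ioi).1 hconv
  · rw [Complex.betaIntegral, intervalIntegral.integral_of_le zero_le_one,
      integral_Ioc_eq_integral_Ioo, ← bijOn_div_one_add.image_eq,
      integral_image_eq_integral_abs_deriv_smul measurableSet_Ioi hderiv bijOn_div_one_add.injOn,
      setIntegral_congr_fun measurableSet_Ioi hcongr, mellin]

lemma hasMellin_one_add_rpow_cpow_neg {p : ℝ} {s w : ℂ} (hp : 0 < p) (hs : 0 < s.re)
    (hsw : s.re < p * w.re) :
    HasMellin (fun x : ℝ ↦ ((1 + x ^ p : ℝ) : ℂ) ^ (-w)) s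
      (p⁻¹ • Complex.betaIntegral (s / p) (w - s / p)) := by
  have hs' : 0 < (s / p).re := by
    rw [Complex.div_ofReal_re]
    positivity
  have ht' : 0 < (w - s / p).re := by
    rw [Complex.sub_re, Complex.div_ofReal_re, sub_pos, div_lt_iff₀' hp]
    exact hsw
  obtain ⟨hconv, hval⟩ := hasMellin_one_add_cpow_neg hs' ht'
  rw [add_sub_cancel] at hconv hval
  refine ⟨(MellinConvergent.comp_rpow (f := fun x : ℝ ↦ ((1 + x : ℝ) : ℂ) ^ (-w)) hp.ne').2 hconv,
    ?_⟩
  rw [mellin_comp_rpow (fun x : ℝ ↦ ((1 + x : ℝ) : ℂ) ^ (-w)), hval, abs_of_pos hp]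

lemma ofReal_inv_sqrt {x : ℝ} (hx : 0 ≤ x) : (((√x)⁻¹ : ℝ) : ℂ) = (x : ℂ) ^ (-(1 / 2) : ℂ) := by
  rw [Real.sqrt_eq_rpow, ← Real.rpow_neg hx, Complex.ofReal_cpow hx]
  push_cast
  rfl

lemma hasMellin_inv_sqrt_one_add_sq {s : ℂ} (hs0 : 0 < s.re) (hs1 : s.re < 1) :
    HasMellin (fun x : ℝ ↦ (((√(1 + x ^ 2))⁻¹ : ℝ) : ℂ)) s
      (Complex.Gamma (s / 2) * Complex.Gamma ((1 - s) / 2) / (2 * (√Real.pi : ℝ))) := by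
  have hre0 : 0 < (s / 2).re := by simpa using hs0
  have hre1 : 0 < ((1 - s) / 2).re := by simpa using hs1
  have hbeta := hasMellin_one_add_rpow_cpow_neg (w := 1 / 2) two_pos hs0 (by simpa using hs1)
  have hGamma : Complex.Gamma (s / 2 + (1 - s) / 2) = (√Real.pi : ℝ) := by
    rw [← Real.Gamma_one_half_eq, ← Complex.Gamma_ofReal]
    congr 1
    push_cast
    ring
  convert hbeta using 1
  · ext x
    rw [ofReal_inv_sqrt (by positivity), Real.rpow_two]
  · rw [Complex.ofReal_ofNat, show (1 / 2 - s / 2 : ℂ) = (1 - s) / 2 by ring,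
      Complex.betaIntegral_eq_Gamma_mul_div _ _ hre0 hre1, hGamma, Complex.real_smul]
    push_cast
    ring

end BetaIntegral

section Arsinh

lemma isBigO_arsinh_nhds_zero : Real.arsinh =O[𝓝 0] (fun x : ℝ ↦ x) := by
  simpa only [Real.arsinh_zero, sub_zero] using (Real.hasDerivAt_arsinh 0).isBigO_sub

lemma isBigO_arsinh_log_atTop : Real.arsinh =O[atTop] Real.log := by
  refine .of_bound 2 ((eventually_ge_atTop 3).mono fun x hx ↦ ?_)
  have hsqrt : √(1 + x ^ 2) ≤ 2 * x := Real.sqrt_le_left (by linarith) |>.2 (by nlinarith)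
  rw [Real.norm_of_nonneg (Real.arsinh_nonneg_iff.2 (by linarith)),
    Real.norm_of_nonneg (Real.log_nonneg (by linarith))]
  calc Real.arsinh x = Real.log (x + √(1 + x ^ 2)) := rfl
    _ ≤ Real.log (x ^ 2) := Real.log_le_log (by positivity) (by nlinarith)
    _ = 2 * Real.log x := by rw [Real.log_pow, Nat.cast_ofNat]

lemma hasMellin_arsinh {s : ℂ} (hs1 : -1 < s.re) (hs0 : s.re < 0) :
    HasMellin (fun x : ℝ ↦ (Real.arsinh x : ℂ)) s
      (-s⁻¹ * (Complex.Gamma ((s + 1) / 2) * Complex.Gamma (-s / 2) / (2 * (√Real.pi : ℝ)))) := by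
  have hne : s ≠ 0 := by
    rintro rfl
    exact lt_irrefl _ hs0
  have htop : (fun x : ℝ ↦ (Real.arsinh x : ℂ)) =O[atTop] (· ^ (-(s.re / 2))) :=
    Complex.isBigO_ofReal_left.2 <|
      isBigO_arsinh_log_atTop.trans (isLittleO_log_rpow_atTop (by linarith)).isBigO
  have hbot : (fun x : ℝ ↦ (Real.arsinh x : ℂ)) =O[𝓝[>] 0] (· ^ (-(-1 : ℝ))) := by
    simpa only [neg_neg, Real.rpow_one, Complex.isBigO_ofReal_left] using
      isBigO_arsinh_nhds_zero.mono nhdsWithin_le_nhds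
  have hderiv : HasMellin (fun x : ℝ ↦ (((√(1 + x ^ 2))⁻¹ : ℝ) : ℂ)) (s + 1)
      (Complex.Gamma ((s + 1) / 2) * Complex.Gamma (-s / 2) / (2 * (√Real.pi : ℝ))) := by
    rw [show -s = 1 - (s + 1) by ring]
    exact hasMellin_inv_sqrt_one_add_sq (by simpa using neg_lt_iff_pos_add.1 hs1)
      (by simpa using hs0)
  exact hasMellin_of_hasDerivAt_of_isBigO_rpow hne
    (fun x _ ↦ (Real.hasDerivAt_arsinh x).ofReal_comp) htop (by linarith) hbot hs1 hderiv

end Arsinh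

/-- for every real `β > 0` and every `σ ∈ ℂ` with `1/2 < Re(σ) < 1`,
`∫₀^∞ u^{-2σ}·arsinh(u/β) du = β^{1-2σ}·Γ(1-σ)·Γ(σ - 1/2)/(2(2σ-1)·√π)`. -/
theorem statement15 (β : ℝ) (hβ : 0 < β) (σ : ℂ) (hσ1 : 1 / 2 < σ.re) (hσ2 : σ.re < 1) :
    ∫ u in Set.Ioi (0 : ℝ),
        (u : ℂ) ^ (-(2 * σ)) * ((Real.arsinh (u / β) : ℝ) : ℂ) =
      ((β : ℝ) : ℂ) ^ (1 - 2 * σ) * Complex.Gamma (1 - σ) * Complex.Gamma (σ - 1 / 2) /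
        (2 * (2 * σ - 1) * ((Real.sqrt Real.pi : ℝ) : ℂ)) := by
  have hre : (1 - 2 * σ).re = 1 - 2 * σ.re := by simp
  have hmellin := (hasMellin_arsinh (s := 1 - 2 * σ) (by linarith) (by linarith)).2
  calc
    _ = mellin (fun u : ℝ ↦ (Real.arsinh (u * β⁻¹) : ℂ)) (1 - 2 * σ) := by
      simp only [mellin, smul_eq_mul, div_eq_mul_inv, sub_sub_cancel_left]
    _ = (β : ℂ) ^ (1 - 2 * σ) * mellin (fun u : ℝ ↦ (Real.arsinh u : ℂ)) (1 - 2 * σ) := by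
      rw [mellin_comp_mul_right (fun u : ℝ ↦ (Real.arsinh u : ℂ)) _ (inv_pos.2 hβ),
        ofReal_inv_cpow hβ.le, neg_neg, smul_eq_mul]
    _ = _ := by
      rw [hmellin, show (1 - 2 * σ + 1) / 2 = 1 - σ by ring,
        show -(1 - 2 * σ) / 2 = σ - 1 / 2 by ring, ← inv_neg, neg_sub]
      simp only [div_eq_mul_inv, mul_inv]
      ring
end
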